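/- arXiv:1109.0898 — 4 statements merged into one kernel-verified Lean document; each statement's English description precedes it below -/
import Mathlib

section
/- (Exponential family, upper bounds.) Assume N, M, n, m → ∞, p = n/N → 0, q = m/M → 0, and log(1/p)/m + log(1/q)/n → 0. If A'(s⁰+a)√(n m p q) → ∞ or liminf A'(s⁰+a)√(nm)/√(2(n log(1/p) + m log(1/q))) > 1, then the test ψ* = max{ψ^lin_H, ψ^max_T} — with H → ∞ such that H < c·A'(s⁰+a)√(n m p q) for some fixed c ∈ (0,1), and T_{nm} = √((2+δ) log G_{nm}) for some sufficiently small δ > 0 — satisfies γ_{nm,a}(ψ*) → 0. -/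
open MeasureTheory ProbabilityTheory Filter Topology
open scoped Classical

noncomputable section

/-- Standard normal cumulative distribution function `Φ`. -/
def Phi (x : ℝ) : ℝ := ((gaussianReal 0 1) (Set.Iic x)).toReal

/-- Law `P_S` of the `N × M` observation matrix `Y_{ij} = s_{ij} + ξ_{ij}`
with i.i.d. standard Gaussian noise. -/
def matLaw (N M : ℕ) (S : Fin N → Fin M → ℝ) : Measure ((Fin N × Fin M) → ℝ) :=
  Measure.pi fun ij => gaussianReal (S ij.1 ij.2) 1

/-- First-type error `α(ψ) = E_0 ψ`. -/
def alphaErr (N M : ℕ) (ψ : ((Fin N × Fin M) → ℝ) → ℝ) : ℝ :=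
  ∫ y, ψ y ∂(matLaw N M fun _ _ => 0)

/-- Second-type error `β(ψ, S) = E_S (1 - ψ)`. -/
def betaErr (N M : ℕ) (S : Fin N → Fin M → ℝ) (ψ : ((Fin N × Fin M) → ℝ) → ℝ) : ℝ :=
  ∫ y, (1 - ψ y) ∂(matLaw N M S)

/-- The alternative class `S_{nm,a}`: some `n × m` submatrix `C = A × B` has all entries `≥ a`,
and all other entries vanish. -/
def SAlt (N M n m : ℕ) (a : ℝ) : Set (Fin N → Fin M → ℝ) :=
  {S | ∃ (A : Finset (Fin N)) (B : Finset (Fin M)), A.card = n ∧ B.card = m ∧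
      (∀ i j, i ∈ A → j ∈ B → a ≤ S i j) ∧ ∀ i j, ¬(i ∈ A ∧ j ∈ B) → S i j = 0}

/-- Maximal second-type error `β_{nm,a}(ψ)`. -/
def betaMax (N M n m : ℕ) (a : ℝ) (ψ : ((Fin N × Fin M) → ℝ) → ℝ) : ℝ :=
  sSup ((fun S => betaErr N M S ψ) '' SAlt N M n m a)

/-- Linear statistic `t_lin`. -/
def tlin (N M : ℕ) (y : (Fin N × Fin M) → ℝ) : ℝ :=
  (∑ ij : Fin N × Fin M, y ij) / Real.sqrt ((N : ℝ) * M)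

/-- Linear test `ψ^lin_H = 1{t_lin > H}`. -/
def psiLin (N M : ℕ) (H : ℝ) (y : (Fin N × Fin M) → ℝ) : ℝ :=
  if H < tlin N M y then 1 else 0

/-- Normalized submatrix sum `Y_C` for `C = A × B`. -/
def YC (N M : ℕ) (y : (Fin N × Fin M) → ℝ)
    (A : Finset (Fin N)) (B : Finset (Fin M)) : ℝ :=
  (∑ i ∈ A, ∑ j ∈ B, y (i, j)) / Real.sqrt ((A.card : ℝ) * B.card)

/-- Scan statistic `t_max = max_{C ∈ C_{nm}} Y_C`. -/
def tmax (N M n m : ℕ) (y : (Fin N × Fin M) → ℝ) : ℝ :=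
  sSup {v | ∃ (A : Finset (Fin N)) (B : Finset (Fin M)),
    A.card = n ∧ B.card = m ∧ v = YC N M y A B}

/-- `G_{nm} = C(N,n) · C(M,m)`, the number of `n × m` submatrices. -/
def Gnm (N M n m : ℕ) : ℕ := N.choose n * M.choose m

/-- Threshold `T_{nm} = √(2 log G_{nm})`. -/
def Tnm (N M n m : ℕ) : ℝ := Real.sqrt (2 * Real.log (Gnm N M n m : ℝ))

/-- Scan test `ψ^max_T = 1{t_max > T}`. -/
def psiMax (N M n m : ℕ) (T : ℝ) (y : (Fin N × Fin M) → ℝ) : ℝ :=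
  if T < tmax N M n m y then 1 else 0

/-- Exponential family law `f_s(y) μ(dy) = exp(s y − A(s)) h(y) μ(dy)`. -/
def expLaw (μ : Measure ℝ) (h : ℝ → ℝ) (A : ℝ → ℝ) (s : ℝ) : Measure ℝ :=
  μ.withDensity fun y => ENNReal.ofReal (Real.exp (s * y - A s) * h y)

/-- Law of the matrix of independent observations `Y_{ij} ∼ f_{s_{ij}}`. -/
def expMatLaw (μ : Measure ℝ) (h : ℝ → ℝ) (A : ℝ → ℝ) (N M : ℕ)
    (S : Fin N → Fin M → ℝ) : Measure ((Fin N × Fin M) → ℝ) :=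
  Measure.pi fun ij => expLaw μ h A (S ij.1 ij.2)

/-- Alternative class for the exponential family model: entries in `I`, equal to
`s⁰` off some `n × m` submatrix and `≥ s⁰ + a` on it. -/
def SAltExp (N M n m : ℕ) (I : Set ℝ) (s0 a : ℝ) : Set (Fin N → Fin M → ℝ) :=
  {S | (∀ i j, S i j ∈ I) ∧ ∃ (A : Finset (Fin N)) (B : Finset (Fin M)),
    A.card = n ∧ B.card = m ∧ (∀ i j, i ∈ A → j ∈ B → s0 + a ≤ S i j) ∧
    ∀ i j, ¬(i ∈ A ∧ j ∈ B) → S i j = s0}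

/-- First-type error in the exponential family model. -/
def alphaExp (μ : Measure ℝ) (h : ℝ → ℝ) (A : ℝ → ℝ) (N M : ℕ) (s0 : ℝ)
    (ψ : ((Fin N × Fin M) → ℝ) → ℝ) : ℝ :=
  ∫ y, ψ y ∂(expMatLaw μ h A N M fun _ _ => s0)

/-- Second-type error in the exponential family model. -/
def betaExp (μ : Measure ℝ) (h : ℝ → ℝ) (A : ℝ → ℝ) (N M : ℕ)
    (S : Fin N → Fin M → ℝ) (ψ : ((Fin N × Fin M) → ℝ) → ℝ) : ℝ :=
  ∫ y, (1 - ψ y) ∂(expMatLaw μ h A N M S)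

/-- Maximal second-type error in the exponential family model. -/
def betaMaxExp (μ : Measure ℝ) (h : ℝ → ℝ) (A : ℝ → ℝ) (N M n m : ℕ)
    (I : Set ℝ) (s0 a : ℝ) (ψ : ((Fin N × Fin M) → ℝ) → ℝ) : ℝ :=
  sSup ((fun S => betaExp μ h A N M S ψ) '' SAltExp N M n m I s0 a)

/-!
The cumulant generating function of the law `expLaw μ h A s` is `w ↦ A (s + w) - A s`, so sums of
observations obey Chernoff bounds in terms of `A`. Since `A` is convex, an entry known to exceed
`b` contributes to the bounds on the type II error at most as much as an entry equal to `b`; near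
`s₀` everything is computed from `A' (s₀ + u) ≈ u`.

Under the null hypothesis, `t_lin` exceeds `H` with probability `O(exp (-H))`, and by the union
bound over the `G` submatrices `t_max` exceeds `T = √((2 + δ) log G)` with probability at most
`G exp (-(1 - o(1)) T² / 2)`, which vanishes because `log G → ∞`.

Under the alternative, fix a small `r > 0`. If `a ≤ r`, the Chernoff bound for `t_lin` with tilt
`(NM)^{-1/2}` per entry is `exp (H + O(1) - (1 - ε) A'(s₀ + a) √(nmpq))` with `ε` small for small
`r`, which vanishes because `H < c A'(s₀ + a) √(nmpq)` with `c < 1`. If `a > r`, the mean of `Y_C`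
over the true submatrix is at least a constant times `√(nm)`, whereas `T = o(√(nm))`, so the scan
test detects it.
-/

/-! ### The log-partition function -/

theorem convexOn_cgf {Ω : Type*} {mΩ : MeasurableSpace Ω} (X : Ω → ℝ) (ν : Measure Ω) :
    ConvexOn ℝ (interior (integrableExpSet X ν)) (cgf X ν) := by
  refine convexOn_of_deriv2_nonneg' convex_integrableExpSet.interior
    analyticOn_cgf.differentiableOn analyticOnNhd_cgf.deriv.differentiableOn fun v hv => ?_
  rw [← iteratedDeriv_eq_iterate, iteratedDeriv_two_cgf_eq_integral hv]
  exact div_nonneg (integral_nonneg fun _ => by positivity) mgf_nonneg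

/-- The law `expLaw μ h A s` is a probability measure for every `s` in the open interval `I`, with
`h` a measurable nonnegative function: the standing assumptions on the exponential family. As `A`
is the normalizing exponent, it is the log-partition function on `I`. -/
structure IsExpFamily (μ : Measure ℝ) (h A : ℝ → ℝ) (I : Set ℝ) : Prop where
  measurable : Measurable h
  nonneg : ∀ y, 0 ≤ h y
  isOpen : IsOpen I
  ordConnected : I.OrdConnected
  isProbabilityMeasure : ∀ s ∈ I, IsProbabilityMeasure (expLaw μ h A s)

namespace IsExpFamily

variable {μ : Measure ℝ} {h A : ℝ → ℝ} {I : Set ℝ} {s w : ℝ}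

lemma lintegral_exp_mul (hF : IsExpFamily μ h A I) (hsw : s + w ∈ I) :
    ∫⁻ y, ENNReal.ofReal (Real.exp (w * y)) ∂expLaw μ h A s
      = ENNReal.ofReal (Real.exp (A (s + w) - A s)) := by
  have hh := hF.measurable
  have hmass : ∫⁻ y, ENNReal.ofReal (Real.exp ((s + w) * y - A (s + w)) * h y) ∂μ = 1 := by
    simpa [expLaw] using (hF.isProbabilityMeasure _ hsw).measure_univ
  have hdensity (y : ℝ) :
      ENNReal.ofReal (Real.exp (s * y - A s) * h y) * ENNReal.ofReal (Real.exp (w * y))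
        = ENNReal.ofReal (Real.exp (A (s + w) - A s)) *
          ENNReal.ofReal (Real.exp ((s + w) * y - A (s + w)) * h y) := by
    rw [← ENNReal.ofReal_mul (mul_nonneg (Real.exp_pos _).le (hF.nonneg y)),
      ← ENNReal.ofReal_mul (Real.exp_pos _).le, mul_right_comm, ← Real.exp_add, ← mul_assoc,
      ← Real.exp_add]
    ring_nf
  rw [expLaw, lintegral_withDensity_eq_lintegral_mul _ (by fun_prop) (by fun_prop)]
  simp only [Pi.mul_apply, hdensity]
  rw [lintegral_const_mul _ (by fun_prop), hmass, mul_one]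

lemma integrable_exp_mul (hF : IsExpFamily μ h A I) (hsw : s + w ∈ I) :
    Integrable (fun y => Real.exp (w * y)) (expLaw μ h A s) := by
  refine ⟨by fun_prop, ?_⟩
  rw [hasFiniteIntegral_iff_ofReal (ae_of_all _ fun y => (Real.exp_pos _).le),
    hF.lintegral_exp_mul hsw]
  exact ENNReal.ofReal_lt_top

lemma cgf_expLaw (hF : IsExpFamily μ h A I) (hsw : s + w ∈ I) :
    cgf id (expLaw μ h A s) w = A (s + w) - A s := by
  simp only [cgf, mgf, id]
  rw [integral_eq_lintegral_of_nonneg_ae (ae_of_all _ fun y => (Real.exp_pos _).le) (by fun_prop),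
    hF.lintegral_exp_mul hsw, ENNReal.toReal_ofReal (Real.exp_pos _).le, Real.log_exp]

-- `0` need not belong to `I`: the measure `expLaw μ h A 0` may be infinite.
lemma eqOn_cgf (hF : IsExpFamily μ h A I) :
    Set.EqOn (fun s => cgf id (expLaw μ h A 0) s + A 0) A I := fun s hs => by
  have hcgf := hF.cgf_expLaw (s := 0) (w := s) (by rwa [zero_add])
  rw [zero_add] at hcgf
  simp only [hcgf, sub_add_cancel]

lemma subset_interior_integrableExpSet (hF : IsExpFamily μ h A I) :
    I ⊆ interior (integrableExpSet id (expLaw μ h A 0)) :=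
  interior_maximal (fun _ hs => hF.integrable_exp_mul (by rwa [zero_add])) hF.isOpen

lemma differentiableAt (hF : IsExpFamily μ h A I) (hs : s ∈ I) : DifferentiableAt ℝ A s :=
  ((analyticAt_cgf (hF.subset_interior_integrableExpSet hs)).differentiableAt.add_const
    (A 0)).congr_of_eventuallyEq (hF.eqOn_cgf.symm.eventuallyEq_of_mem (hF.isOpen.mem_nhds hs))

lemma convexOn (hF : IsExpFamily μ h A I) : ConvexOn ℝ I A :=
  (((convexOn_cgf id _).subset hF.subset_interior_integrableExpSet
    hF.ordConnected.convex).add_const (A 0)).congr hF.eqOn_cgf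

lemma monotoneOn_deriv (hF : IsExpFamily μ h A I) : MonotoneOn (deriv A) I :=
  hF.convexOn.monotoneOn_deriv fun _ hs => hF.differentiableAt hs

-- By convexity, an unknown parameter `s` may be replaced by the smallest value `b` it can take.
lemma sub_le_neg_mul_deriv (hF : IsExpFamily μ h A I) {b θ : ℝ} (hs : s ∈ I) (hbs : b ≤ s)
    (hbθ : b - θ ∈ I) (hθ : 0 < θ) : A (s - θ) - A s ≤ -(θ * deriv A (b - θ)) := by
  have hsθ : s - θ ∈ I := hF.ordConnected.out hbθ hs ⟨by linarith, by linarith⟩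
  have hslope := hF.convexOn.deriv_le_slope hsθ hs (by linarith) (hF.differentiableAt hsθ)
  have hmono : deriv A (b - θ) ≤ deriv A (s - θ) :=
    hF.monotoneOn_deriv hbθ hsθ (by linarith)
  rw [slope_def_field, sub_sub_cancel, le_div_iff₀ hθ] at hslope
  linarith [mul_le_mul_of_nonneg_left hmono hθ.le]

section Chernoff

variable {ι : Type*} [Fintype ι] {S : ι → ℝ} {t : Finset ι}

lemma integrable_exp_mul_sum (hF : IsExpFamily μ h A I) (hS : ∀ i, S i ∈ I)
    (hw : ∀ i ∈ t, S i + w ∈ I) :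
    Integrable (fun y : ι → ℝ => Real.exp (w * ∑ i ∈ t, y i))
      (Measure.pi fun i => expLaw μ h A (S i)) := by
  have (i : ι) := hF.isProbabilityMeasure _ (hS i)
  simpa using (iIndepFun_pi (X := fun _ => id) fun i =>
    aemeasurable_id).integrable_exp_mul_sum (fun i => measurable_pi_apply i) fun i hi =>
      integrable_comp_eval (μ := fun i => expLaw μ h A (S i)) (i := i)
        (f := fun y => Real.exp (w * y)) (hF.integrable_exp_mul (hw i hi))

lemma cgf_sum (hF : IsExpFamily μ h A I) (hS : ∀ i, S i ∈ I) (hw : ∀ i ∈ t, S i + w ∈ I) :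
    cgf (fun y : ι → ℝ => ∑ i ∈ t, y i) (Measure.pi fun i => expLaw μ h A (S i)) w
      = ∑ i ∈ t, (A (S i + w) - A (S i)) := by
  have (i : ι) := hF.isProbabilityMeasure _ (hS i)
  have hsum := (iIndepFun_pi (μ := fun i => expLaw μ h A (S i)) (X := fun _ => id) fun i =>
    aemeasurable_id).cgf_sum (fun i => measurable_pi_apply i) (s := t) (t := w) fun i hi =>
      integrable_comp_eval (μ := fun i => expLaw μ h A (S i)) (i := i)
        (f := fun y => Real.exp (w * y)) (hF.integrable_exp_mul (hw i hi))
  have hmarg (i : ι) : cgf (fun y : ι → ℝ => y i) (Measure.pi fun i => expLaw μ h A (S i)) w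
      = cgf id (expLaw μ h A (S i)) w := by
    have hmap := (measurePreserving_eval (fun i => expLaw μ h A (S i)) i).map_eq
    rw [cgf, cgf, ← hmap, mgf_id_map]
    exact (measurable_pi_apply i).aemeasurable
  have hfun : (∑ i ∈ t, fun y : ι → ℝ => id (y i)) = fun y => ∑ i ∈ t, y i := by
    ext y; simp
  rw [← hfun, hsum]
  exact Finset.sum_congr rfl fun i hi => (hmarg i).trans (hF.cgf_expLaw (hw i hi))

lemma measureReal_le_sum_le (hF : IsExpFamily μ h A I) (hS : ∀ i, S i ∈ I) (hw0 : 0 ≤ w)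
    (hw : ∀ i ∈ t, S i + w ∈ I) (x : ℝ) :
    (Measure.pi fun i => expLaw μ h A (S i)).real {y | x ≤ ∑ i ∈ t, y i}
      ≤ Real.exp (-w * x + ∑ i ∈ t, (A (S i + w) - A (S i))) := by
  have (i : ι) := hF.isProbabilityMeasure _ (hS i)
  rw [← hF.cgf_sum hS hw]
  exact measure_ge_le_exp_cgf x hw0 (hF.integrable_exp_mul_sum hS hw)

lemma measureReal_sum_le_le (hF : IsExpFamily μ h A I) (hS : ∀ i, S i ∈ I) (hw0 : w ≤ 0)
    (hw : ∀ i ∈ t, S i + w ∈ I) (x : ℝ) :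
    (Measure.pi fun i => expLaw μ h A (S i)).real {y | ∑ i ∈ t, y i ≤ x}
      ≤ Real.exp (-w * x + ∑ i ∈ t, (A (S i + w) - A (S i))) := by
  have (i : ι) := hF.isProbabilityMeasure _ (hS i)
  rw [← hF.cgf_sum hS hw]
  exact measure_le_le_exp_cgf x hw0 (hF.integrable_exp_mul_sum hS hw)

end Chernoff

end IsExpFamily

/-- On `[s₀ - r, s₀ + r] ⊆ I` the derivative `A'(s₀ + u)` equals `u` up to a relative error `ε`:
the quantitative form of `A'(s₀) = 0` and `A''(s₀) = 1` in which they enter all estimates. -/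
def DerivNearId (A : ℝ → ℝ) (I : Set ℝ) (s₀ ε r : ℝ) : Prop :=
  ∀ u, |u| ≤ r → s₀ + u ∈ I ∧ |deriv A (s₀ + u) - u| ≤ ε * |u|

lemma exists_derivNearId {A : ℝ → ℝ} {I : Set ℝ} {s₀ ε : ℝ} (hI : I ∈ 𝓝 s₀)
    (hd1 : deriv A s₀ = 0) (hd2 : HasDerivAt (deriv A) 1 s₀) (hε : 0 < ε) :
    ∃ r > 0, DerivNearId A I s₀ ε r := by
  have hmem : ∀ᶠ u in 𝓝 (0 : ℝ), s₀ + u ∈ I :=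
    (continuous_const_add s₀).tendsto' 0 s₀ (add_zero s₀) hI
  have hlin : ∀ᶠ u in 𝓝 (0 : ℝ), |deriv A (s₀ + u) - u| ≤ ε * |u| := by
    simpa [hd1] using (hasDerivAt_iff_isLittleO_nhds_zero.1 hd2).bound hε
  obtain ⟨r, hr, hball⟩ := Metric.nhds_basis_closedBall.eventually_iff.1 (hmem.and hlin)
  exact ⟨r, hr, fun u hu => hball (by simpa using hu)⟩

namespace DerivNearId

variable {A : ℝ → ℝ} {I : Set ℝ} {s₀ ε r u v : ℝ}

lemma mem (hA : DerivNearId A I s₀ ε r) (hu : |u| ≤ r) : s₀ + u ∈ I := (hA u hu).1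

lemma deriv_le (hA : DerivNearId A I s₀ ε r) (hu0 : 0 ≤ u) (hur : u ≤ r) :
    deriv A (s₀ + u) ≤ (1 + ε) * u := by
  have habs := (hA u (by rwa [abs_of_nonneg hu0])).2
  rw [abs_of_nonneg hu0] at habs
  linarith [le_abs_self (deriv A (s₀ + u) - u)]

lemma le_deriv (hA : DerivNearId A I s₀ ε r) (hu0 : 0 ≤ u) (hur : u ≤ r) :
    (1 - ε) * u ≤ deriv A (s₀ + u) := by
  have habs := (hA u (by rwa [abs_of_nonneg hu0])).2
  rw [abs_of_nonneg hu0] at habs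
  linarith [neg_abs_le (deriv A (s₀ + u) - u)]

lemma le_deriv_of_nonpos (hA : DerivNearId A I s₀ ε r) (hu0 : u ≤ 0) (hur : -r ≤ u) :
    (1 + ε) * u ≤ deriv A (s₀ + u) := by
  have habs := (hA u (by rw [abs_of_nonpos hu0]; linarith)).2
  rw [abs_of_nonpos hu0] at habs
  linarith [neg_abs_le (deriv A (s₀ + u) - u)]

lemma sub_le (hA : DerivNearId A I s₀ ε r) (hd : ∀ s ∈ I, DifferentiableAt ℝ A s) (hu0 : 0 ≤ u)
    (hur : u ≤ r) : A (s₀ + u) - A s₀ ≤ (1 + ε) / 2 * u ^ 2 := by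
  have hA' (x : ℝ) (hx : x ∈ Set.Icc 0 u) :
      HasDerivAt (fun x => A (s₀ + x) - A s₀) (deriv A (s₀ + x)) x :=
    ((hd _ (hA.mem (by rw [abs_of_nonneg hx.1]; exact hx.2.trans hur))).hasDerivAt.comp_const_add
      s₀ x).sub_const _
  have hsq (x : ℝ) : HasDerivAt (fun x => (1 + ε) / 2 * x ^ 2) ((1 + ε) * x) x := by
    convert! (hasDerivAt_pow 2 x).const_mul ((1 + ε) / 2) using 1
    ring
  exact image_le_of_deriv_right_le_deriv_boundary
    (fun x hx => (hA' x hx).continuousAt.continuousWithinAt)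
    (fun x hx => (hA' x ⟨hx.1, hx.2.le⟩).hasDerivWithinAt) (by simp)
    (fun x _ => (hsq x).continuousAt.continuousWithinAt)
    (fun x _ => (hsq x).hasDerivWithinAt)
    (fun x hx => hA.deriv_le hx.1 (hx.2.le.trans hur)) ⟨hu0, le_rfl⟩

lemma mul_deriv_sub_le (hA : DerivNearId A I s₀ ε r) (hε0 : 0 ≤ ε) (hε1 : ε ≤ 1) {lam : ℝ}
    (hlam0 : 0 ≤ lam) (hlam : lam * (1 + ε) ≤ 1 - ε) (hu0 : 0 ≤ u) (hur : u ≤ r) (hv0 : 0 ≤ v)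
    (hvr : v ≤ r) :
    lam * deriv A (s₀ + u) - 2 * v ≤ deriv A (s₀ + (u - v)) := by
  have hu : lam * deriv A (s₀ + u) ≤ (1 - ε) * u :=
    calc lam * deriv A (s₀ + u) ≤ lam * ((1 + ε) * u) := by gcongr; exact hA.deriv_le hu0 hur
      _ = lam * (1 + ε) * u := by ring
      _ ≤ (1 - ε) * u := by gcongr
  rcases le_total v u with hvu | huv
  · have hderiv := hA.le_deriv (sub_nonneg.2 hvu) (by linarith : u - v ≤ r)
    linarith [mul_nonneg hε0 hv0]
  · have hderiv := hA.le_deriv_of_nonpos (sub_nonpos.2 huv) (by linarith : -r ≤ u - v)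
    linarith [mul_nonneg hε0 hu0, mul_nonneg (sub_nonneg.2 hε1) hv0]

end DerivNearId

/-! ### The test `ψ*` -/

/-- The collection `C_{nm}` of submatrices `C = A × B`, encoded as the pairs `(A, B)`. -/
def submatrices (N M n m : ℕ) : Finset (Finset (Fin N) × Finset (Fin M)) :=
  Finset.univ.powersetCard n ×ˢ Finset.univ.powersetCard m

/-- The test `ψ* = max {ψ^lin_H, ψ^max_T}`. -/
def psiStar (N M n m : ℕ) (H T : ℝ) (y : (Fin N × Fin M) → ℝ) : ℝ :=
  max (psiLin N M H y) (psiMax N M n m T y)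

/-- The observations at which `psiStar` rejects the null hypothesis. -/
def rejectionRegion (N M n m : ℕ) (H T : ℝ) : Set ((Fin N × Fin M) → ℝ) :=
  {y | H < tlin N M y ∨ T < tmax N M n m y}

section Tests

variable {N M n m : ℕ} {H T : ℝ}

lemma mem_submatrices {C : Finset (Fin N) × Finset (Fin M)} :
    C ∈ submatrices N M n m ↔ C.1.card = n ∧ C.2.card = m := by
  simp [submatrices, Finset.mem_powersetCard]

lemma card_submatrices : (submatrices N M n m).card = Gnm N M n m := by
  simp [submatrices, Gnm, Finset.card_product, Finset.card_powersetCard]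

lemma submatrices_nonempty (hn : n ≤ N) (hm : m ≤ M) : (submatrices N M n m).Nonempty := by
  rw [← Finset.card_pos, card_submatrices]
  exact Nat.mul_pos (Nat.choose_pos hn) (Nat.choose_pos hm)

lemma sqrt_card_mul_YC (y : (Fin N × Fin M) → ℝ) (P : Finset (Fin N)) (Q : Finset (Fin M)) :
    √((P.card : ℝ) * Q.card) * YC N M y P Q = ∑ ij ∈ P ×ˢ Q, y ij := by
  rw [YC, Finset.sum_product]
  refine mul_div_cancel_of_imp' fun hsqrt => ?_
  rcases mul_eq_zero.1 ((Real.sqrt_eq_zero (by positivity)).1 hsqrt) with hP | hQ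
  · simp [Finset.card_eq_zero.1 (Nat.cast_eq_zero.1 hP)]
  · simp [Finset.card_eq_zero.1 (Nat.cast_eq_zero.1 hQ)]

lemma tlin_eq_YC (y : (Fin N × Fin M) → ℝ) :
    tlin N M y = YC N M y Finset.univ Finset.univ := by
  simp [tlin, YC, Fintype.sum_prod_type]

lemma measurable_YC (P : Finset (Fin N)) (Q : Finset (Fin M)) :
    Measurable fun y => YC N M y P Q := by
  unfold YC
  fun_prop

lemma measurable_tlin : Measurable (tlin N M) := by
  unfold tlin
  fun_prop

lemma tmax_eq_sSup_image (y : (Fin N × Fin M) → ℝ) :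
    tmax N M n m y = sSup ((fun C : Finset (Fin N) × Finset (Fin M) => YC N M y C.1 C.2) ''
      submatrices N M n m) := by
  rw [tmax]
  congr 1
  ext v
  simp [mem_submatrices, and_assoc, eq_comm]

lemma lt_tmax_iff (hn : n ≤ N) (hm : m ≤ M) {y : (Fin N × Fin M) → ℝ} :
    T < tmax N M n m y ↔ ∃ C ∈ submatrices N M n m, T < YC N M y C.1 C.2 := by
  rw [tmax_eq_sSup_image, lt_csSup_iff ((submatrices N M n m).finite_toSet.image _).bddAbove
    ((submatrices_nonempty hn hm).to_set.image _), Set.exists_mem_image]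
  rfl

lemma rejectionRegion_eq_union (hn : n ≤ N) (hm : m ≤ M) :
    rejectionRegion N M n m H T = {y | H < tlin N M y} ∪
      ⋃ C ∈ submatrices N M n m, {y | T < YC N M y C.1 C.2} := by
  ext y
  simp only [rejectionRegion, lt_tmax_iff hn hm, Set.mem_ofPred_eq, Set.mem_union, Set.mem_iUnion,
    exists_prop]

lemma measurableSet_rejectionRegion (hn : n ≤ N) (hm : m ≤ M) :
    MeasurableSet (rejectionRegion N M n m H T) := by
  rw [rejectionRegion_eq_union hn hm]
  exact (measurableSet_lt measurable_const measurable_tlin).union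
    (Finset.measurableSet_biUnion _ fun C _ =>
      measurableSet_lt measurable_const (measurable_YC C.1 C.2))

lemma psiStar_eq_indicator :
    psiStar N M n m H T = (rejectionRegion N M n m H T).indicator 1 := by
  ext y
  by_cases hlin : H < tlin N M y <;> by_cases hmax : T < tmax N M n m y <;>
    simp [psiStar, psiLin, psiMax, rejectionRegion, hlin, hmax]

variable {μ : Measure ℝ} {h A : ℝ → ℝ}

lemma alphaExp_psiStar_eq (hn : n ≤ N) (hm : m ≤ M) (s₀ : ℝ) :
    alphaExp μ h A N M s₀ (psiStar N M n m H T)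
      = (expMatLaw μ h A N M fun _ _ => s₀).real (rejectionRegion N M n m H T) := by
  rw [alphaExp, psiStar_eq_indicator, integral_indicator_one (measurableSet_rejectionRegion hn hm)]

lemma betaExp_psiStar_eq (hn : n ≤ N) (hm : m ≤ M) (S : Fin N → Fin M → ℝ) :
    betaExp μ h A N M S (psiStar N M n m H T)
      = (expMatLaw μ h A N M S).real (rejectionRegion N M n m H T)ᶜ := by
  rw [betaExp, ← integral_indicator_one (measurableSet_rejectionRegion hn hm).compl,
    psiStar_eq_indicator]
  congr 1 with y
  by_cases hy : y ∈ rejectionRegion N M n m H T <;> simp [hy]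

end Tests

namespace IsExpFamily

variable {μ : Measure ℝ} {h A : ℝ → ℝ} {I : Set ℝ} {N M n m : ℕ} {s₀ a H T : ℝ}
  {S : Fin N → Fin M → ℝ}

lemma isProbabilityMeasure_expMatLaw (hF : IsExpFamily μ h A I) (hS : ∀ i j, S i j ∈ I) :
    IsProbabilityMeasure (expMatLaw μ h A N M S) := by
  have (ij : Fin N × Fin M) := hF.isProbabilityMeasure _ (hS ij.1 ij.2)
  rw [expMatLaw]
  infer_instance

lemma alphaExp_psiStar_le_add_sum (hF : IsExpFamily μ h A I) (hs₀ : s₀ ∈ I) (hn : n ≤ N)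
    (hm : m ≤ M) :
    alphaExp μ h A N M s₀ (psiStar N M n m H T)
      ≤ (expMatLaw μ h A N M fun _ _ => s₀).real {y | H ≤ tlin N M y} +
        ∑ C ∈ submatrices N M n m,
          (expMatLaw μ h A N M fun _ _ => s₀).real {y | T ≤ YC N M y C.1 C.2} := by
  have := hF.isProbabilityMeasure_expMatLaw (N := N) (M := M) fun _ _ => hs₀
  rw [alphaExp_psiStar_eq hn hm, rejectionRegion_eq_union hn hm]
  refine (measureReal_union_le _ _).trans (add_le_add ?_ ?_)
  · exact measureReal_mono (Set.ofPred_subset_ofPred.2 fun y hy => hy.le)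
  · exact (measureReal_biUnion_finset_le _ _).trans
      (Finset.sum_le_sum fun C _ => measureReal_mono (Set.ofPred_subset_ofPred.2 fun y hy => hy.le))

lemma betaExp_psiStar_le_tlin (hF : IsExpFamily μ h A I) (hS : ∀ i j, S i j ∈ I) (hn : n ≤ N)
    (hm : m ≤ M) :
    betaExp μ h A N M S (psiStar N M n m H T)
      ≤ (expMatLaw μ h A N M S).real {y | tlin N M y ≤ H} := by
  have := hF.isProbabilityMeasure_expMatLaw hS
  rw [betaExp_psiStar_eq hn hm]
  exact measureReal_mono fun y hy => not_lt.1 fun hlin => hy (Or.inl hlin)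

lemma betaExp_psiStar_le_YC (hF : IsExpFamily μ h A I) (hS : ∀ i j, S i j ∈ I) (hn : n ≤ N)
    (hm : m ≤ M) {C : Finset (Fin N) × Finset (Fin M)} (hC : C ∈ submatrices N M n m) :
    betaExp μ h A N M S (psiStar N M n m H T)
      ≤ (expMatLaw μ h A N M S).real {y | YC N M y C.1 C.2 ≤ T} := by
  have := hF.isProbabilityMeasure_expMatLaw hS
  rw [betaExp_psiStar_eq hn hm]
  exact measureReal_mono fun y hy => not_lt.1 fun hscan =>
    hy (Or.inr ((lt_tmax_iff hn hm).2 ⟨C, hC, hscan⟩))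

end IsExpFamily

/-! ### Non-asymptotic error bounds -/

namespace IsExpFamily

variable {μ : Measure ℝ} {h A : ℝ → ℝ} {I : Set ℝ} {N M n m : ℕ} {s₀ ε r a b θ lam H T t x : ℝ}
  {S : Fin N → Fin M → ℝ} {P : Finset (Fin N)} {Q : Finset (Fin M)}

lemma measureReal_le_YC_le (hF : IsExpFamily μ h A I) (hs₀ : s₀ ∈ I)
    (hA : DerivNearId A I s₀ ε r) (hr : 0 ≤ r) (ht0 : 0 ≤ t)
    (htr : t ≤ r * √((P.card : ℝ) * Q.card)) :
    (expMatLaw μ h A N M fun _ _ => s₀).real {y | x ≤ YC N M y P Q}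
      ≤ Real.exp ((1 + ε) / 2 * t ^ 2 - t * x) := by
  have := hF.isProbabilityMeasure_expMatLaw (N := N) (M := M) fun _ _ => hs₀
  set w := √((P.card : ℝ) * Q.card) with hw
  have hw0 : 0 ≤ w := Real.sqrt_nonneg _
  obtain ⟨u, hu0, hur, rfl⟩ : ∃ u, 0 ≤ u ∧ u ≤ r ∧ u * w = t :=
    ⟨t / w, by positivity, div_le_of_le_mul₀ hw0 hr htr,
      div_mul_cancel_of_imp fun hw0 => le_antisymm (by simpa [hw0] using htr) ht0⟩
  have hmem : s₀ + u ∈ I := hA.mem (by rwa [abs_of_nonneg hu0])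
  calc (expMatLaw μ h A N M fun _ _ => s₀).real {y | x ≤ YC N M y P Q}
      ≤ (expMatLaw μ h A N M fun _ _ => s₀).real {y | w * x ≤ ∑ ij ∈ P ×ˢ Q, y ij} :=
        measureReal_mono (Set.ofPred_subset_ofPred.2 fun y hy => by
          rw [← sqrt_card_mul_YC]
          exact mul_le_mul_of_nonneg_left hy hw0)
    _ ≤ Real.exp (-u * (w * x) + ∑ _ ∈ P ×ˢ Q, (A (s₀ + u) - A s₀)) :=
        hF.measureReal_le_sum_le (fun _ => hs₀) hu0 (fun _ _ => hmem) _
    _ ≤ Real.exp (-u * (w * x) + w ^ 2 * ((1 + ε) / 2 * u ^ 2)) := by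
        rw [Finset.sum_const, Finset.card_product, nsmul_eq_mul, hw, Real.sq_sqrt (by positivity),
          Nat.cast_mul]
        gcongr
        exact hA.sub_le (fun _ hs => hF.differentiableAt hs) hu0 hur
    _ = Real.exp ((1 + ε) / 2 * (u * w) ^ 2 - u * w * x) := by ring_nf

lemma measureReal_YC_le_le (hF : IsExpFamily μ h A I) (hS : ∀ i j, S i j ∈ I) (hθ : 0 ≤ θ)
    (hSθ : ∀ i ∈ P, ∀ j ∈ Q, S i j - θ ∈ I) :
    (expMatLaw μ h A N M S).real {y | YC N M y P Q ≤ x}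
      ≤ Real.exp (θ * (√((P.card : ℝ) * Q.card) * x)
        + ∑ ij ∈ P ×ˢ Q, (A (S ij.1 ij.2 - θ) - A (S ij.1 ij.2))) := by
  have := hF.isProbabilityMeasure_expMatLaw hS
  calc (expMatLaw μ h A N M S).real {y | YC N M y P Q ≤ x}
      ≤ (expMatLaw μ h A N M S).real
          {y | ∑ ij ∈ P ×ˢ Q, y ij ≤ √((P.card : ℝ) * Q.card) * x} :=
        measureReal_mono (Set.ofPred_subset_ofPred.2 fun y hy => by
          rw [← sqrt_card_mul_YC]
          exact mul_le_mul_of_nonneg_left hy (Real.sqrt_nonneg _))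
    _ ≤ _ := by
        have hchernoff := hF.measureReal_sum_le_le (S := fun ij : Fin N × Fin M => S ij.1 ij.2)
          (t := P ×ˢ Q) (fun _ => hS _ _) (neg_nonpos.2 hθ) (fun _ hij => hSθ _
            (Finset.mem_product.1 hij).1 _ (Finset.mem_product.1 hij).2)
          (√((P.card : ℝ) * Q.card) * x)
        simp only [neg_neg, ← sub_eq_add_neg] at hchernoff
        exact hchernoff

theorem alphaExp_psiStar_le (hF : IsExpFamily μ h A I) (hs₀ : s₀ ∈ I)
    (hA : DerivNearId A I s₀ ε r) (hn : n ≤ N) (hm : m ≤ M) (hNM : 1 ≤ r * √((N : ℝ) * M))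
    (hT0 : 0 ≤ T) (hT : T ≤ r * √((n : ℝ) * m)) :
    alphaExp μ h A N M s₀ (psiStar N M n m H T)
      ≤ Real.exp ((1 + ε) / 2 - H) + Gnm N M n m * Real.exp (-((1 - ε) / 2 * T ^ 2)) := by
  have hr : 0 ≤ r := (pos_of_mul_pos_left (one_pos.trans_le hNM) (Real.sqrt_nonneg _)).le
  refine (hF.alphaExp_psiStar_le_add_sum hs₀ hn hm).trans (add_le_add ?_ ?_)
  · simp only [tlin_eq_YC]
    refine (hF.measureReal_le_YC_le hs₀ hA hr zero_le_one (by simpa using hNM)).trans_eq ?_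
    ring_nf
  · rw [← card_submatrices, ← nsmul_eq_mul]
    refine Finset.sum_le_card_nsmul _ _ _ fun C hC => ?_
    obtain ⟨hCn, hCm⟩ := mem_submatrices.1 hC
    refine (hF.measureReal_le_YC_le hs₀ hA hr hT0 (by rwa [hCn, hCm])).trans_eq ?_
    ring_nf

lemma sqrt_mul_div_mul_div (N M n m : ℕ) :
    √((n : ℝ) * m * ((n : ℝ) / N) * ((m : ℝ) / M)) = n * m / √((N : ℝ) * M) := by
  rw [show (n : ℝ) * m * (n / N) * (m / M) = (n * m) ^ 2 / (N * M) by ring,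
    Real.sqrt_div (by positivity), Real.sqrt_sq (by positivity)]

lemma sum_shift_le (hF : IsExpFamily μ h A I) {d₀ d₁ : ℝ} (hθ : 0 < θ) (hs₀θ : s₀ - θ ∈ I)
    (haθ : s₀ + a - θ ∈ I) (hd₀ : d₀ ≤ deriv A (s₀ - θ)) (hd₁ : d₀ + d₁ ≤ deriv A (s₀ + a - θ))
    (hS : ∀ i j, S i j ∈ I) (hge : ∀ i j, i ∈ P → j ∈ Q → s₀ + a ≤ S i j)
    (heq : ∀ i j, ¬(i ∈ P ∧ j ∈ Q) → S i j = s₀) :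
    ∑ ij : Fin N × Fin M, (A (S ij.1 ij.2 - θ) - A (S ij.1 ij.2))
      ≤ -(θ * (N * M * d₀ + P.card * Q.card * d₁)) := by
  have hentry (ij : Fin N × Fin M) : A (S ij.1 ij.2 - θ) - A (S ij.1 ij.2)
      ≤ -(θ * (d₀ + if ij ∈ P ×ˢ Q then d₁ else 0)) := by
    by_cases hij : ij.1 ∈ P ∧ ij.2 ∈ Q
    · rw [if_pos (Finset.mem_product.2 hij)]
      exact (hF.sub_le_neg_mul_deriv (hS _ _) (hge _ _ hij.1 hij.2) haθ hθ).trans (by gcongr)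
    · rw [if_neg (mt Finset.mem_product.1 hij), add_zero]
      exact (hF.sub_le_neg_mul_deriv (hS _ _) (heq _ _ hij).ge hs₀θ hθ).trans (by gcongr)
  refine (Finset.sum_le_sum fun ij _ => hentry ij).trans_eq ?_
  rw [Finset.sum_neg_distrib, ← Finset.mul_sum, Finset.sum_add_distrib, Finset.sum_ite_mem,
    Finset.univ_inter]
  simp [Finset.card_product]

-- The tilt `(NM)^{-1/2}` keeps the cost of all `NM` entries bounded: it is the `2` below.
theorem betaExp_psiStar_le_of_le (hF : IsExpFamily μ h A I) (hsa : s₀ + a ∈ I)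
    (hA : DerivNearId A I s₀ ε r) (hε0 : 0 ≤ ε) (hε1 : ε ≤ 1) (hlam0 : 0 ≤ lam)
    (hlam : lam * (1 + ε) ≤ 1 - ε) (hn : n ≤ N) (hm : m ≤ M)
    (hNM : 1 ≤ r * √((N : ℝ) * M)) (ha0 : 0 ≤ a) (har : a ≤ r) (hS : S ∈ SAltExp N M n m I s₀ a) :
    betaExp μ h A N M S (psiStar N M n m H T)
      ≤ Real.exp (2 + H - lam * (deriv A (s₀ + a) *
        √((n : ℝ) * m * ((n : ℝ) / N) * ((m : ℝ) / M)))) := by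
  obtain ⟨hSI, P, Q, rfl, rfl, hge, heq⟩ := hS
  have hr : 0 < r := pos_of_mul_pos_left (one_pos.trans_le hNM) (Real.sqrt_nonneg _)
  have hq : 0 < √((N : ℝ) * M) := pos_of_mul_pos_right (one_pos.trans_le hNM) hr.le
  set q := √((N : ℝ) * M) with hq_def
  have hθ : 0 < q⁻¹ := inv_pos.2 hq
  have hθr : q⁻¹ ≤ r := (inv_le_iff_one_le_mul₀ hq).2 hNM
  have hs₀θ : s₀ - q⁻¹ ∈ I := hA.mem (by rwa [abs_neg, abs_of_pos hθ])
  have hshift (s : ℝ) (hs : s ∈ I) (hs₀s : s₀ ≤ s) : s - q⁻¹ ∈ I :=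
    hF.ordConnected.out hs₀θ hs ⟨by linarith, by linarith⟩
  have hS₀ (i : Fin N) (j : Fin M) : s₀ ≤ S i j := by
    by_cases hij : i ∈ P ∧ j ∈ Q
    · linarith [hge i j hij.1 hij.2]
    · exact (heq i j hij).ge
  have hd₀ := hA.mul_deriv_sub_le hε0 hε1 le_rfl (by linarith) le_rfl hr.le hθ.le hθr
  have hd₁ := hA.mul_deriv_sub_le hε0 hε1 hlam0 hlam ha0 har hθ.le hθr
  rw [zero_mul, zero_sub, zero_sub, ← sub_eq_add_neg] at hd₀
  rw [← add_sub_assoc, sub_eq_neg_add] at hd₁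
  refine (hF.betaExp_psiStar_le_tlin hSI hn hm).trans ?_
  simp only [tlin_eq_YC]
  refine (hF.measureReal_YC_le_le hSI hθ.le fun i _ j _ => hshift _ (hSI i j) (hS₀ i j)).trans
    (Real.exp_le_exp.2 ?_)
  have hsum := hF.sum_shift_le hθ hs₀θ (hshift _ hsa (by linarith)) hd₀ hd₁ hSI hge heq
  rw [← Real.sq_sqrt (by positivity : 0 ≤ (N : ℝ) * M), ← hq_def] at hsum
  simp only [Finset.univ_product_univ, Finset.card_univ, Fintype.card_fin, ← hq_def]
  rw [sqrt_mul_div_mul_div, ← hq_def]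
  refine (add_le_add_right hsum _).trans_eq ?_
  field_simp
  ring

theorem betaExp_psiStar_le_of_ge (hF : IsExpFamily μ h A I) (hn : n ≤ N) (hm : m ≤ M)
    (hθ : 0 < θ) (hb : b - θ ∈ I) (hba : b ≤ s₀ + a) (hS : S ∈ SAltExp N M n m I s₀ a) :
    betaExp μ h A N M S (psiStar N M n m H T)
      ≤ Real.exp (θ * (√((n : ℝ) * m) * T - n * m * deriv A (b - θ))) := by
  obtain ⟨hSI, P, Q, rfl, rfl, hge, -⟩ := hS
  have hC : (P, Q) ∈ submatrices N M P.card Q.card := mem_submatrices.2 ⟨rfl, rfl⟩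
  have hshift (i : Fin N) (hi : i ∈ P) (j : Fin M) (hj : j ∈ Q) : S i j - θ ∈ I :=
    hF.ordConnected.out hb (hSI i j) ⟨by linarith [hge i j hi hj], by linarith⟩
  refine (hF.betaExp_psiStar_le_YC hSI hn hm hC).trans
    ((hF.measureReal_YC_le_le hSI hθ.le hshift).trans (Real.exp_le_exp.2 ?_))
  have hsum : ∑ ij ∈ P ×ˢ Q, (A (S ij.1 ij.2 - θ) - A (S ij.1 ij.2))
      ≤ (P ×ˢ Q).card • -(θ * deriv A (b - θ)) :=
    Finset.sum_le_card_nsmul _ _ _ fun ij hij => by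
      obtain ⟨hi, hj⟩ := Finset.mem_product.1 hij
      exact hF.sub_le_neg_mul_deriv (hSI _ _) (hba.trans (hge _ _ hi hj)) hb hθ
  rw [Finset.card_product, nsmul_eq_mul, Nat.cast_mul] at hsum
  linarith

theorem betaExp_psiStar_le (hF : IsExpFamily μ h A I) (hsa : s₀ + a ∈ I)
    (hA : DerivNearId A I s₀ ε r) (hε0 : 0 ≤ ε) (hε1 : ε ≤ 1) (hlam0 : 0 ≤ lam)
    (hlam : lam * (1 + ε) ≤ 1 - ε) (hn : n ≤ N) (hm : m ≤ M) (hNM : 1 ≤ r * √((N : ℝ) * M))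
    (ha0 : 0 ≤ a) (hT : T ≤ deriv A (s₀ + r / 2) / 2 * √((n : ℝ) * m))
    (hS : S ∈ SAltExp N M n m I s₀ a) :
    betaExp μ h A N M S (psiStar N M n m H T)
      ≤ Real.exp (2 + H - lam * (deriv A (s₀ + a) *
          √((n : ℝ) * m * ((n : ℝ) / N) * ((m : ℝ) / M)))) +
        Real.exp (-(r * deriv A (s₀ + r / 2) / 4 * (n * m))) := by
  have hr : 0 < r := pos_of_mul_pos_left (one_pos.trans_le hNM) (Real.sqrt_nonneg _)
  rcases le_total a r with har | hra
  · exact (hF.betaExp_psiStar_le_of_le hsa hA hε0 hε1 hlam0 hlam hn hm hNM ha0 har hS).trans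
      (le_add_of_nonneg_right (Real.exp_pos _).le)
  · have hhalf : s₀ + r - r / 2 = s₀ + r / 2 := by ring
    have hmem : s₀ + r - r / 2 ∈ I := by
      rw [hhalf]
      exact hA.mem (by rw [abs_of_pos (half_pos hr)]; linarith)
    refine (hF.betaExp_psiStar_le_of_ge hn hm (half_pos hr) hmem (by linarith) hS).trans
      (le_add_of_nonneg_of_le (Real.exp_pos _).le (Real.exp_le_exp.2 ?_))
    have hsq : √((n : ℝ) * m) * √((n : ℝ) * m) = n * m := Real.mul_self_sqrt (by positivity)
    rw [hhalf]
    calc r / 2 * (√((n : ℝ) * m) * T - n * m * deriv A (s₀ + r / 2))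
        ≤ r / 2 * (√((n : ℝ) * m) * (deriv A (s₀ + r / 2) / 2 * √((n : ℝ) * m))
          - n * m * deriv A (s₀ + r / 2)) := by gcongr
      _ = -(r * deriv A (s₀ + r / 2) / 4 * (n * m)) := by
        linear_combination r * deriv A (s₀ + r / 2) / 4 * hsq

end IsExpFamily

/-! ### Limits -/

section Asymptotics

variable {ι : Type*} {l : Filter ι} {K L : ι → ℝ}

lemma log_choose_le {N n : ℕ} (hn : 0 < n) (hnN : n ≤ N) :
    Real.log (N.choose n) ≤ n * (Real.log ((N : ℝ) / n) + 1) := by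
  have hN : 0 < N := hn.trans_le hnN
  have hexp : (N.choose n : ℝ) ≤ ((N : ℝ) / n) ^ n * Real.exp n :=
    calc (N.choose n : ℝ) ≤ (N : ℝ) ^ n / n.factorial := Nat.choose_le_pow_div n N
      _ = ((N : ℝ) / n) ^ n * ((n : ℝ) ^ n / n.factorial) := by rw [div_pow]; field_simp
      _ ≤ ((N : ℝ) / n) ^ n * Real.exp n := by
        gcongr
        exact Real.pow_div_factorial_le_exp _ n.cast_nonneg n
  refine (Real.log_le_log (by exact_mod_cast Nat.choose_pos hnN) hexp).trans_eq ?_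
  rw [Real.log_mul (by positivity) (by positivity), Real.log_pow, Real.log_exp]
  ring

lemma div_le_choose {N n : ℕ} (hn : 0 < n) (hnN : n ≤ N) : (N : ℝ) / n ≤ N.choose n := by
  obtain ⟨k, rfl⟩ := Nat.exists_eq_add_one.2 hn
  obtain ⟨K, rfl⟩ := Nat.exists_eq_add_one.2 (hn.trans_le hnN)
  have hpos : 1 ≤ K.choose k := Nat.choose_pos (Nat.le_of_succ_le_succ hnN)
  rw [div_le_iff₀ (by positivity)]
  exact_mod_cast (Nat.le_mul_of_pos_right _ hpos).trans_eq (Nat.add_one_mul_choose_eq K k)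

lemma tendsto_log_Gnm {N M n m : ι → ℕ}
    (hn : ∀ t, 0 < n t) (hnN : ∀ t, n t ≤ N t) (hmM : ∀ t, m t ≤ M t)
    (hp : Tendsto (fun t => (n t : ℝ) / N t) l (𝓝 0)) :
    Tendsto (fun t => Real.log (Gnm (N t) (M t) (n t) (m t))) l atTop := by
  have hpos (t : ι) : (0 : ℝ) < (n t : ℝ) / N t := by
    have hn := hn t
    have hN := hn.trans_le (hnN t)
    positivity
  have hinv : Tendsto (fun t => ((n t : ℝ) / N t)⁻¹) l atTop :=
    (tendsto_nhdsWithin_iff.2 ⟨hp, .of_forall hpos⟩).inv_tendsto_nhdsGT_zero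
  refine Real.tendsto_log_atTop.comp (tendsto_atTop_mono (fun t => ?_) hinv)
  rw [inv_div]
  refine (div_le_choose (hn t) (hnN t)).trans ?_
  exact_mod_cast Nat.le_mul_of_pos_right _ (Nat.choose_pos (hmM t))

lemma log_Gnm_div_le {N M n m : ℕ} (hn : 0 < n) (hnN : n ≤ N) (hm : 0 < m) (hmM : m ≤ M) :
    Real.log (Gnm N M n m) / ((n : ℝ) * m)
      ≤ Real.log ((N : ℝ) / n) / m + Real.log ((M : ℝ) / m) / n + 1 / n + 1 / m := by
  rw [Gnm, Nat.cast_mul, Real.log_mul (by exact_mod_cast (Nat.choose_pos hnN).ne')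
    (by exact_mod_cast (Nat.choose_pos hmM).ne'), div_le_iff₀ (by positivity)]
  refine (add_le_add (log_choose_le hn hnN) (log_choose_le hm hmM)).trans_eq ?_
  field_simp
  ring

lemma tendsto_log_Gnm_div {N M n m : ι → ℕ}
    (hb : ∀ t, 1 ≤ n t ∧ n t ≤ N t ∧ 1 ≤ m t ∧ m t ≤ M t)
    (hn : Tendsto n l atTop) (hm : Tendsto m l atTop)
    (htend : Tendsto (fun t =>
      Real.log ((N t : ℝ) / n t) / m t + Real.log ((M t : ℝ) / m t) / n t) l (𝓝 0)) :
    Tendsto (fun t => Real.log (Gnm (N t) (M t) (n t) (m t)) / ((n t : ℝ) * m t)) l (𝓝 0) := by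
  have hsum := (htend.add (tendsto_one_div_atTop_nhds_zero_nat.comp hn)).add
    (tendsto_one_div_atTop_nhds_zero_nat.comp hm)
  simp only [add_zero] at hsum
  refine squeeze_zero (fun t => ?_) (fun t => ?_) hsum
  · exact div_nonneg (Real.log_natCast_nonneg _) (by positivity)
  · obtain ⟨hn, hnN, hm, hmM⟩ := hb t
    exact log_Gnm_div_le hn hnN hm hmM

lemma tendsto_atTop_of_tendsto_div_zero (hK : ∀ t, 0 < K t) (hL : Tendsto L l atTop)
    (hLK : Tendsto (fun t => L t / K t) l (𝓝 0)) : Tendsto K l atTop :=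
  tendsto_atTop_mono' l ((hLK.eventually_le_const one_pos).mono fun t ht =>
    (div_le_one (hK t)).1 ht) hL

lemma eventually_sqrt_mul_le (hK : ∀ t, 0 < K t) (hLK : Tendsto (fun t => L t / K t) l (𝓝 0))
    (c : ℝ) {r : ℝ} (hr : 0 < r) : ∀ᶠ t in l, √(c * L t) ≤ r * √(K t) := by
  have hlim := hLK.const_mul c
  rw [mul_zero] at hlim
  filter_upwards [hlim.eventually_le_const (pow_pos hr 2)] with t ht
  rw [← mul_div_assoc, div_le_iff₀ (hK t)] at ht
  refine (Real.sqrt_le_sqrt ht).trans_eq ?_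
  rw [Real.sqrt_mul (by positivity), Real.sqrt_sq hr.le]

lemma tendsto_exp_neg_add_exp_neg (hK : Tendsto K l atTop) (hL : Tendsto L l atTop) :
    Tendsto (fun t => Real.exp (-K t) + Real.exp (-L t)) l (𝓝 0) := by
  simpa using (Real.tendsto_exp_neg_atTop_nhds_zero.comp hK).add
    (Real.tendsto_exp_neg_atTop_nhds_zero.comp hL)

end Asymptotics

section Limits

variable {μ : Measure ℝ} {h A : ℝ → ℝ} {I : Set ℝ} {s₀ δ c : ℝ} {ι : Type*} {l : Filter ι}
  {N M n m : ι → ℕ} {a H T : ι → ℝ}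

lemma eventually_one_le_mul_sqrt (hnN : ∀ t, n t ≤ N t) (hmM : ∀ t, m t ≤ M t)
    (hnm : Tendsto (fun t => (n t : ℝ) * m t) l atTop) {r : ℝ} (hr : 0 < r) :
    ∀ᶠ t in l, 1 ≤ r * √((N t : ℝ) * M t) := by
  filter_upwards [((Real.tendsto_sqrt_atTop.comp hnm).const_mul_atTop hr).eventually_ge_atTop 1]
    with t ht
  refine ht.trans ?_
  have hnN : (n t : ℝ) ≤ N t := by exact_mod_cast hnN t
  have hmM : (m t : ℝ) ≤ M t := by exact_mod_cast hmM t
  simp only [Function.comp_apply]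
  gcongr

lemma natCast_mul_exp_neg_sq_sqrt {G : ℕ} (hG : 0 < G) (hδ : 0 ≤ 2 + δ) {ε : ℝ}
    (hε : (1 - ε) * (2 + δ) = 2 + δ / 2) :
    G * Real.exp (-((1 - ε) / 2 * √((2 + δ) * Real.log G) ^ 2))
      = Real.exp (-(δ / 4 * Real.log G)) := by
  have hG' : (0 : ℝ) < G := by exact_mod_cast hG
  rw [Real.sq_sqrt (mul_nonneg hδ (Real.log_natCast_nonneg G))]
  nth_rw 1 [← Real.exp_log hG']
  rw [← Real.exp_add, Real.exp_eq_exp]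
  linear_combination -Real.log G / 2 * hε

theorem tendsto_alphaExp_psiStar (hF : IsExpFamily μ h A I) (hs₀ : s₀ ∈ I)
    (hd1 : deriv A s₀ = 0) (hd2 : HasDerivAt (deriv A) 1 s₀)
    (hnN : ∀ t, n t ≤ N t) (hmM : ∀ t, m t ≤ M t)
    (hnm : Tendsto (fun t => (n t : ℝ) * m t) l atTop)
    (hG : Tendsto (fun t => Real.log (Gnm (N t) (M t) (n t) (m t))) l atTop)
    (hH : Tendsto H l atTop) (hδ : 0 < δ)
    (hT : ∀ t, T t = √((2 + δ) * Real.log (Gnm (N t) (M t) (n t) (m t))))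
    (hTr : ∀ r > 0, ∀ᶠ t in l, T t ≤ r * √((n t : ℝ) * m t)) :
    Tendsto (fun t => alphaExp μ h A (N t) (M t) s₀
      (psiStar (N t) (M t) (n t) (m t) (H t) (T t))) l (𝓝 0) := by
  obtain ⟨ε, hε0, hε1, hε⟩ : ∃ ε, 0 < ε ∧ ε ≤ 1 ∧ (1 - ε) * (2 + δ) = 2 + δ / 2 :=
    ⟨δ / (2 * (2 + δ)), by positivity, by rw [div_le_one (by positivity)]; linarith,
      by field_simp; ring⟩
  obtain ⟨r, hr, hA⟩ := exists_derivNearId (hF.isOpen.mem_nhds hs₀) hd1 hd2 hε0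
  refine squeeze_zero' (.of_forall fun t => ?_) ?_ (tendsto_exp_neg_add_exp_neg
    (tendsto_atTop_add_const_right l (-1) hH)
    (hG.const_mul_atTop (by positivity : 0 < δ / 4)))
  · rw [alphaExp_psiStar_eq (hnN t) (hmM t)]
    exact measureReal_nonneg
  filter_upwards [eventually_one_le_mul_sqrt hnN hmM hnm hr, hTr r hr] with t hNM hTt
  refine (hF.alphaExp_psiStar_le hs₀ hA (hnN t) (hmM t) hNM (by rw [hT]; positivity) hTt).trans ?_
  have hG0 : 0 < Gnm (N t) (M t) (n t) (m t) :=
    Nat.mul_pos (Nat.choose_pos (hnN t)) (Nat.choose_pos (hmM t))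
  rw [hT, natCast_mul_exp_neg_sq_sqrt hG0 (by positivity) hε]
  gcongr
  linarith

theorem tendsto_betaMaxExp_psiStar (hF : IsExpFamily μ h A I) (hs₀ : s₀ ∈ I)
    (hd1 : deriv A s₀ = 0) (hd2 : HasDerivAt (deriv A) 1 s₀)
    (hnN : ∀ t, n t ≤ N t) (hmM : ∀ t, m t ≤ M t)
    (ha : ∀ t, 0 < a t) (hsa : ∀ t, s₀ + a t ∈ I)
    (hnm : Tendsto (fun t => (n t : ℝ) * m t) l atTop)
    (hH : Tendsto H l atTop) (hc0 : 0 < c) (hc1 : c < 1)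
    (hHc : ∀ t, H t < c * (deriv A (s₀ + a t) *
      √((n t : ℝ) * m t * ((n t : ℝ) / N t) * ((m t : ℝ) / M t))))
    (hTr : ∀ r > 0, ∀ᶠ t in l, T t ≤ r * √((n t : ℝ) * m t)) :
    Tendsto (fun t => betaMaxExp μ h A (N t) (M t) (n t) (m t) I s₀ (a t)
      (psiStar (N t) (M t) (n t) (m t) (H t) (T t))) l (𝓝 0) := by
  have hε : (0 : ℝ) < (1 - c) / 4 := by linarith
  have hlam : (1 + c) / 2 * (1 + (1 - c) / 4) ≤ 1 - (1 - c) / 4 := by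
    linarith [sq_nonneg (1 - c)]
  obtain ⟨r, hr, hA⟩ := exists_derivNearId (hF.isOpen.mem_nhds hs₀) hd1 hd2 hε
  have hderiv : 0 < deriv A (s₀ + r / 2) :=
    (mul_pos (by linarith) (half_pos hr)).trans_le
      (hA.le_deriv (half_pos hr).le (half_le_self hr.le))
  refine squeeze_zero' (.of_forall fun t => ?_) ?_ (tendsto_exp_neg_add_exp_neg
    (tendsto_atTop_add_const_right l (-2)
      (hH.const_mul_atTop (div_pos (sub_pos.2 hc1) (mul_pos two_pos hc0))))
    (hnm.const_mul_atTop (by positivity : 0 < r * deriv A (s₀ + r / 2) / 4)))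
  · refine Real.sSup_nonneg ?_
    rintro _ ⟨S, -, rfl⟩
    simp only [betaExp_psiStar_eq (hnN t) (hmM t)]
    exact measureReal_nonneg
  filter_upwards [eventually_one_le_mul_sqrt hnN hmM hnm hr, hTr _ (half_pos hderiv)] with t hNM hTt
  refine Real.sSup_le ?_ (by positivity)
  rintro _ ⟨S, hS, rfl⟩
  refine (hF.betaExp_psiStar_le (hsa t) hA hε.le (by linarith) (by linarith) hlam (hnN t) (hmM t)
    hNM (ha t).le hTt hS).trans ?_
  gcongr
  have hsignal := hHc t
  generalize deriv A (s₀ + a t) * √_ = L at hsignal ⊢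
  have hL : H t / c ≤ L := (div_le_iff₀' hc0).2 hsignal.le
  calc 2 + H t - (1 + c) / 2 * L ≤ 2 + H t - (1 + c) / 2 * (H t / c) := by gcongr
    _ = -((1 - c) / (2 * c) * H t + -2) := by field_simp; ring

end Limits

theorem stmt10_general {μ : Measure ℝ} {h A : ℝ → ℝ} {I : Set ℝ} {s₀ δ c : ℝ} {ι : Type*}
    {l : Filter ι} {N M n m : ι → ℕ} {a H : ι → ℝ} (hF : IsExpFamily μ h A I) (hs₀ : s₀ ∈ I)
    (hd1 : HasDerivAt A 0 s₀) (hd2 : HasDerivAt (deriv A) 1 s₀)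
    (hb : ∀ t, 1 ≤ n t ∧ n t ≤ N t ∧ 1 ≤ m t ∧ m t ≤ M t)
    (ha : ∀ t, 0 < a t) (hsa : ∀ t, s₀ + a t ∈ I)
    (hG : Tendsto (fun t => Real.log (Gnm (N t) (M t) (n t) (m t))) l atTop)
    (hGo : Tendsto (fun t => Real.log (Gnm (N t) (M t) (n t) (m t)) / ((n t : ℝ) * m t)) l (𝓝 0))
    (hH : Tendsto H l atTop) (hc0 : 0 < c) (hc1 : c < 1)
    (hHc : ∀ t, H t < c * (deriv A (s₀ + a t) *
      √((n t : ℝ) * m t * ((n t : ℝ) / N t) * ((m t : ℝ) / M t)))) (hδ : 0 < δ) :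
    Tendsto (fun t =>
      alphaExp μ h A (N t) (M t) s₀ (psiStar (N t) (M t) (n t) (m t) (H t)
        √((2 + δ) * Real.log (Gnm (N t) (M t) (n t) (m t)))) +
      betaMaxExp μ h A (N t) (M t) (n t) (m t) I s₀ (a t) (psiStar (N t) (M t) (n t) (m t) (H t)
        √((2 + δ) * Real.log (Gnm (N t) (M t) (n t) (m t))))) l (𝓝 0) := by
  have hpos (t : ι) : 0 < (n t : ℝ) * m t := by
    exact_mod_cast Nat.mul_pos (hb t).1 (hb t).2.2.1
  have hnN (t : ι) := (hb t).2.1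
  have hmM (t : ι) := (hb t).2.2.2
  have hnm := tendsto_atTop_of_tendsto_div_zero hpos hG hGo
  have hTr (r : ℝ) (hr : r > 0) := eventually_sqrt_mul_le hpos hGo (2 + δ) hr
  have halpha := tendsto_alphaExp_psiStar hF hs₀ hd1.deriv hd2 hnN hmM hnm hG hH hδ
    (fun _ => rfl) hTr
  have hbeta := tendsto_betaMaxExp_psiStar hF hs₀ hd1.deriv hd2 hnN hmM ha hsa hnm hH hc0 hc1
    hHc hTr
  simpa only [add_zero] using halpha.add hbeta

/-- Theorem 6 (exponential family, upper bounds): if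
`A'(s⁰+a)√(nmpq) → ∞` or `liminf A'(s⁰+a)√(nm)/√(2(n log(1/p)+m log(1/q))) > 1`,
then `ψ* = max{ψ^lin_H, ψ^max_T}` with `H → ∞`, `H < c A'(s⁰+a)√(nmpq)` for some
`c ∈ (0,1)`, and `T_{nm} = √((2+δ) log G_{nm})` for sufficiently small `δ > 0`
satisfies `γ_{nm,a}(ψ*) → 0`. -/
theorem stmt10 (μ : Measure ℝ) [SigmaFinite μ] (h : ℝ → ℝ) (A : ℝ → ℝ)
    (I : Set ℝ) (s0 : ℝ)
    (hh : Measurable h) (hh0 : ∀ y, 0 ≤ h y)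
    (hI : IsOpen I) (hI' : I.OrdConnected) (hs0 : s0 ∈ I)
    (hA : ∀ s ∈ I, A s = Real.log (∫ y, Real.exp (s * y) * h y ∂μ))
    (hprob : ∀ s ∈ I, IsProbabilityMeasure (expLaw μ h A s))
    (hd1 : HasDerivAt A 0 s0) (hd2 : HasDerivAt (deriv A) 1 s0)
    (N M n m : ℕ → ℕ) (a H : ℕ → ℝ)
    (hb : ∀ t, 1 ≤ n t ∧ n t ≤ N t ∧ 1 ≤ m t ∧ m t ≤ M t)
    (ha : ∀ t, 0 < a t) (hsa : ∀ t, s0 + a t ∈ I)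
    (hN : Tendsto N atTop atTop) (hM : Tendsto M atTop atTop)
    (hn : Tendsto n atTop atTop) (hm : Tendsto m atTop atTop)
    (hp : Tendsto (fun t => (n t : ℝ) / N t) atTop (nhds 0))
    (hq : Tendsto (fun t => (m t : ℝ) / M t) atTop (nhds 0))
    (htend : Tendsto (fun t =>
        Real.log ((N t : ℝ) / n t) / m t + Real.log ((M t : ℝ) / m t) / n t)
      atTop (nhds 0))
    (hH : Tendsto H atTop atTop)
    (hHc : ∃ c : ℝ, 0 < c ∧ c < 1 ∧ ∀ t,
      H t < c * (deriv A (s0 + a t) *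
        Real.sqrt ((n t : ℝ) * m t * ((n t : ℝ) / N t) * ((m t : ℝ) / M t))))
    (hcond :
      Tendsto (fun t => deriv A (s0 + a t) *
          Real.sqrt ((n t : ℝ) * m t * ((n t : ℝ) / N t) * ((m t : ℝ) / M t)))
        atTop atTop ∨
      1 < Filter.liminf (fun t =>
          deriv A (s0 + a t) * Real.sqrt ((n t : ℝ) * m t) /
            Real.sqrt (2 * ((n t : ℝ) * Real.log ((N t : ℝ) / n t) +
              (m t : ℝ) * Real.log ((M t : ℝ) / m t)))) atTop) :
    ∃ δ₀ : ℝ, 0 < δ₀ ∧ ∀ δ : ℝ, 0 < δ → δ ≤ δ₀ →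
      Tendsto (fun t =>
        alphaExp μ h A (N t) (M t) s0 (fun y =>
            max (psiLin (N t) (M t) (H t) y)
              (psiMax (N t) (M t) (n t) (m t)
                (Real.sqrt ((2 + δ) * Real.log (Gnm (N t) (M t) (n t) (m t) : ℝ))) y)) +
          betaMaxExp μ h A (N t) (M t) (n t) (m t) I s0 (a t) (fun y =>
            max (psiLin (N t) (M t) (H t) y)
              (psiMax (N t) (M t) (n t) (m t)
                (Real.sqrt ((2 + δ) * Real.log (Gnm (N t) (M t) (n t) (m t) : ℝ))) y)))
        atTop (nhds 0) := by
  obtain ⟨c, hc0, hc1, hHc⟩ := hHc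
  have hG := tendsto_log_Gnm (fun t => (hb t).1) (fun t => (hb t).2.1) (fun t => (hb t).2.2.2) hp
  exact ⟨1, one_pos, fun δ hδ _ => stmt10_general ⟨hh, hh0, hI, hI', hprob⟩ hs0 hd1 hd2 hb ha hsa
    hG (tendsto_log_Gnm_div hb hn hm htend) hH hc0 hc1 hHc hδ⟩
end
end

section
/- (Truncated exponential moment bound, truncation at the submatrix sums.) For every T > 0 with b ≥ T/(1+ρ), E_0[exp(−b² + b(Y_{C₁} + Y_{C₂})) · 1{Y_{C₁} ≤ T, Y_{C₂} ≤ T}] ≤ exp(−(T − b)² + ρT²/(1+ρ)). -/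
/-!
A random variable `X` with `X ≤ t` on the event `s` satisfies
`E[exp(bX) 1_s] ≤ exp((b - c)t) E[exp(cX)]` for every `c ≤ b`. If `X` is sub-Gaussian with
variance proxy `v`, the best choice `c = t/v` gives `exp(bt - t²/(2v))`; it is admissible when
`t/v ≤ b`. The normalized sums `Y_C`, `Y_D` are linear forms in independent variables whose
coefficient vectors are unit vectors with inner product `ρ`, so `Y_C + Y_D` is sub-Gaussian with
variance proxy `2(1 + ρ)`, and it is at most `2T` on the truncation event. Taking
`v = 2(1 + ρ)` and `t = 2T`, the exponent is `-b² + 2bT - T²/(1 + ρ) = -(T - b)² + ρT²/(1 + ρ)`.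
-/

open MeasureTheory ProbabilityTheory Filter Topology
open scoped Classical

noncomputable section

section TruncatedExponentialMoment

variable {Ω : Type*} [MeasurableSpace Ω] {μ : Measure Ω} {X : Ω → ℝ} {s : Set Ω} {t b : ℝ}

lemma integral_indicator_exp_mul_le_exp_mul_mgf {c : ℝ} (hX : ∀ ω ∈ s, X ω ≤ t) (hcb : c ≤ b)
    (hint : Integrable (fun ω ↦ Real.exp (c * X ω)) μ) :
    ∫ ω, s.indicator (fun ω ↦ Real.exp (b * X ω)) ω ∂μ ≤ Real.exp ((b - c) * t) * mgf X μ c := by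
  rw [mgf, ← integral_const_mul]
  refine integral_mono_of_nonneg
    (ae_of_all _ <| Set.indicator_nonneg fun _ _ ↦ Real.exp_nonneg _) (hint.const_mul _)
    (ae_of_all _ <| Set.indicator_le' (fun ω hω ↦ ?_) fun _ _ ↦ by positivity)
  have htilt : (b - c) * X ω ≤ (b - c) * t :=
    mul_le_mul_of_nonneg_left (hX ω hω) (sub_nonneg.mpr hcb)
  rw [← Real.exp_add]
  exact Real.exp_le_exp.mpr (by linarith)

lemma integral_indicator_exp_mul_le_of_hasSubgaussianMGF {v : NNReal}
    (hsub : HasSubgaussianMGF X v μ) (hv : v ≠ 0) (hX : ∀ ω ∈ s, X ω ≤ t) (hb : t / v ≤ b) :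
    ∫ ω, s.indicator (fun ω ↦ Real.exp (b * X ω)) ω ∂μ ≤
      Real.exp (b * t - t ^ 2 / (2 * v)) := by
  calc ∫ ω, s.indicator (fun ω ↦ Real.exp (b * X ω)) ω ∂μ
      ≤ Real.exp ((b - t / v) * t) * mgf X μ (t / v) :=
        integral_indicator_exp_mul_le_exp_mul_mgf hX hb (hsub.integrable_exp_mul _)
    _ ≤ Real.exp ((b - t / v) * t) * Real.exp (v * (t / v) ^ 2 / 2) := by
        gcongr
        exact hsub.mgf_le _
    _ = Real.exp (b * t - t ^ 2 / (2 * v)) := by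
        rw [← Real.exp_add]
        congr 1
        field_simp
        ring

end TruncatedExponentialMoment

section NormalizedSum

variable {ι : Type*} {C D U s : Finset ι}

/-- The normalized sum `Y_U = (#U)^{-1/2} ∑_{i ∈ U} Y_i` over a finite index set `U`. -/
def normalizedSum (U : Finset ι) (y : ι → ℝ) : ℝ :=
  (∑ i ∈ U, y i) / √U.card

/-- The `ℓ²`-normalized indicator of `U`, the coefficient vector of the linear form
`normalizedSum U`. -/
def unitIndicator (U : Finset ι) : ι → ℝ :=
  (U : Set ι).indicator fun _ ↦ (√U.card)⁻¹

/-- The normalized overlap `ρ = #(C ∩ D) / √(#C #D)` of two finite index sets, which is the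
correlation of the normalized sums over `C` and `D` of i.i.d. variables. It takes values in `ℝ≥0`
because it enters variance proxies. -/
def overlap [DecidableEq ι] (C D : Finset ι) : NNReal :=
  (C ∩ D).card / NNReal.sqrt (C.card * D.card)

lemma sum_unitIndicator_mul (hU : U ⊆ s) (y : ι → ℝ) :
    ∑ i ∈ s, unitIndicator U i * y i = normalizedSum U y := by
  simp only [unitIndicator, Set.indicator_apply, Finset.mem_coe, ite_mul, zero_mul,
    Finset.sum_ite_mem, Finset.inter_eq_right.mpr hU, ← Finset.mul_sum, normalizedSum]
  rw [div_eq_inv_mul]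

section Overlap

variable [DecidableEq ι]

lemma normalizedSum_unitIndicator (C D : Finset ι) :
    normalizedSum C (unitIndicator D) = overlap C D := by
  simp only [normalizedSum, unitIndicator, Set.indicator_apply, Finset.mem_coe,
    Finset.sum_ite_mem, Finset.sum_const, nsmul_eq_mul, overlap, NNReal.coe_div, Real.coe_sqrt,
    NNReal.coe_mul, NNReal.coe_natCast, Real.sqrt_mul (Nat.cast_nonneg _)]
  rw [← div_eq_mul_inv, div_div, mul_comm]

lemma coe_overlap_of_card_eq {k : ℕ} (hC : C.card = k) (hD : D.card = k) :
    (overlap C D : ℝ) = (C ∩ D).card / k := by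
  simp [overlap, hC, hD]

lemma overlap_self (hC : C.Nonempty) : overlap C C = 1 := by
  rw [← NNReal.coe_inj, coe_overlap_of_card_eq rfl rfl, Finset.inter_self, NNReal.coe_one]
  exact div_self (by exact_mod_cast hC.card_ne_zero)

lemma sum_sq_unitIndicator_add (hC : C.Nonempty) (hD : D.Nonempty) (hCs : C ⊆ s) (hDs : D ⊆ s) :
    ∑ i ∈ s, (unitIndicator C i + unitIndicator D i) ^ 2 = 2 * (1 + overlap C D) := by
  calc ∑ i ∈ s, (unitIndicator C i + unitIndicator D i) ^ 2
      = ∑ i ∈ s, unitIndicator C i * unitIndicator C i +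
          ∑ i ∈ s, unitIndicator D i * unitIndicator D i +
          2 * ∑ i ∈ s, unitIndicator C i * unitIndicator D i := by
        rw [Finset.mul_sum, ← Finset.sum_add_distrib, ← Finset.sum_add_distrib]
        exact Finset.sum_congr rfl fun i _ ↦ by ring
    _ = 2 * (1 + overlap C D) := by
        rw [sum_unitIndicator_mul hCs, sum_unitIndicator_mul hDs, sum_unitIndicator_mul hCs]
        simp only [normalizedSum_unitIndicator, overlap_self hC, overlap_self hD, NNReal.coe_one]
        ring

end Overlap

end NormalizedSum

section Subgaussian

variable {ι Ω : Type*} [MeasurableSpace Ω] {P : Measure Ω} {ξ : ι → Ω → ℝ}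

lemma hasSubgaussianMGF_sum_mul (hindep : iIndepFun ξ P) {c : ι → NNReal} {s : Finset ι}
    (hsub : ∀ i ∈ s, HasSubgaussianMGF (ξ i) (c i) P) (w : ι → ℝ) :
    HasSubgaussianMGF (fun ω ↦ ∑ i ∈ s, w i * ξ i ω) (∑ i ∈ s, ‖w i‖₊ ^ 2 * c i) P := by
  have hindep' : iIndepFun (fun i ω ↦ w i * ξ i ω) P :=
    hindep.comp (fun i x ↦ w i * x) fun i ↦ measurable_const_mul (w i)
  refine HasSubgaussianMGF.sum_of_iIndepFun hindep' fun i hi ↦ ?_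
  have hw : ‖w i‖₊ ^ 2 = .mk (w i ^ 2) (sq_nonneg (w i)) := NNReal.eq (by simp)
  exact hw ▸ (hsub i hi).const_mul (w i)

lemma hasSubgaussianMGF_normalizedSum_add [DecidableEq ι] (hindep : iIndepFun ξ P)
    {C D : Finset ι} (hsub : ∀ i ∈ C ∪ D, HasSubgaussianMGF (ξ i) 1 P)
    (hC : C.Nonempty) (hD : D.Nonempty) :
    HasSubgaussianMGF (fun ω ↦ normalizedSum C (ξ · ω) + normalizedSum D (ξ · ω))
      (2 * (1 + overlap C D)) P := by
  convert hasSubgaussianMGF_sum_mul hindep hsub (unitIndicator C + unitIndicator D) using 1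
  · ext ω
    simp only [Pi.add_apply, add_mul, Finset.sum_add_distrib,
      sum_unitIndicator_mul Finset.subset_union_left,
      sum_unitIndicator_mul Finset.subset_union_right]
  · rw [← NNReal.coe_inj]
    simpa using (sum_sq_unitIndicator_add hC hD Finset.subset_union_left
      Finset.subset_union_right).symm

theorem stmt15_general [DecidableEq ι] (hindep : iIndepFun ξ P) {C D : Finset ι}
    (hsub : ∀ i ∈ C ∪ D, HasSubgaussianMGF (ξ i) 1 P) (hC : C.Nonempty) (hD : D.Nonempty)
    {b T : ℝ} (hbT : T / (1 + overlap C D) ≤ b) :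
    ∫ ω, Real.exp (-b ^ 2 + b * (normalizedSum C (ξ · ω) + normalizedSum D (ξ · ω))) *
        (if normalizedSum C (ξ · ω) ≤ T ∧ normalizedSum D (ξ · ω) ≤ T then 1 else 0) ∂P ≤
      Real.exp (-(T - b) ^ 2 + overlap C D * T ^ 2 / (1 + overlap C D)) := by
  set X : Ω → ℝ := fun ω ↦ normalizedSum C (ξ · ω) + normalizedSum D (ξ · ω)
  set s : Set Ω := {ω | normalizedSum C (ξ · ω) ≤ T ∧ normalizedSum D (ξ · ω) ≤ T}
  have hX : ∀ ω ∈ s, X ω ≤ 2 * T := fun ω hω ↦ (add_le_add hω.1 hω.2).trans_eq (two_mul T).symm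
  have hb : 2 * T / (2 * (1 + overlap C D) : NNReal) ≤ b := by
    push_cast
    rwa [mul_div_mul_left _ _ two_ne_zero]
  calc ∫ ω, Real.exp (-b ^ 2 + b * X ω) * (if ω ∈ s then 1 else 0) ∂P
      = Real.exp (-b ^ 2) * ∫ ω, s.indicator (fun ω ↦ Real.exp (b * X ω)) ω ∂P := by
        rw [← integral_const_mul]
        simp only [Real.exp_add, mul_ite, mul_one, mul_zero, Set.indicator_apply]
    _ ≤ Real.exp (-b ^ 2) *
          Real.exp (b * (2 * T) - (2 * T) ^ 2 / (2 * (2 * (1 + overlap C D) : NNReal))) := by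
        gcongr
        exact integral_indicator_exp_mul_le_of_hasSubgaussianMGF
          (hasSubgaussianMGF_normalizedSum_add hindep hsub hC hD) (by positivity) hX hb
    _ = Real.exp (-(T - b) ^ 2 + overlap C D * T ^ 2 / (1 + overlap C D)) := by
        rw [← Real.exp_add]
        congr 1
        push_cast
        field_simp
        ring

end Subgaussian

lemma hasSubgaussianMGF_id_gaussianReal (v : NNReal) :
    HasSubgaussianMGF id v (gaussianReal 0 v) where
  integrable_exp_mul := integrable_exp_mul_gaussianReal
  mgf_le t := by simp only [mgf_id_gaussianReal, zero_mul, zero_add, le_refl]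

section MatLaw

variable {N M : ℕ}

lemma iIndepFun_eval_matLaw (S : Fin N → Fin M → ℝ) :
    iIndepFun (fun ij (y : Fin N × Fin M → ℝ) ↦ y ij) (matLaw N M S) :=
  iIndepFun_pi fun _ ↦ aemeasurable_id

lemma hasSubgaussianMGF_eval_matLaw_zero (ij : Fin N × Fin M) :
    HasSubgaussianMGF (fun y ↦ y ij) 1 (matLaw N M fun _ _ ↦ 0) := by
  have heval : MeasurePreserving (Function.eval ij) (matLaw N M fun _ _ ↦ 0) (gaussianReal 0 1) :=
    measurePreserving_eval _ ij
  exact .of_map heval.aemeasurable (heval.map_eq ▸ hasSubgaussianMGF_id_gaussianReal 1)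

lemma YC_eq_normalizedSum (y : Fin N × Fin M → ℝ) (A : Finset (Fin N)) (B : Finset (Fin M)) :
    YC N M y A B = normalizedSum (A ×ˢ B) y := by
  rw [YC, normalizedSum, Finset.sum_product, Finset.card_product, Nat.cast_mul]

end MatLaw

lemma coe_overlap_product {α β : Type*} [DecidableEq α] [DecidableEq β] {n m : ℕ}
    {A₁ A₂ : Finset α} {B₁ B₂ : Finset β} (hA₁ : A₁.card = n) (hA₂ : A₂.card = n)
    (hB₁ : B₁.card = m) (hB₂ : B₂.card = m) :
    (overlap (A₁ ×ˢ B₁) (A₂ ×ˢ B₂) : ℝ) =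
      (A₁ ∩ A₂).card * (B₁ ∩ B₂).card / ((n : ℝ) * m) := by
  rw [coe_overlap_of_card_eq (k := n * m) (by rw [Finset.card_product, hA₁, hB₁])
    (by rw [Finset.card_product, hA₂, hB₂]), Finset.product_inter_product, Finset.card_product]
  push_cast
  rfl

/-- Lemma 1 (2) (truncated exponential moment bound, truncation at the submatrix
sums): for `T > 0` with `b ≥ T/(1+ρ)`,
`E_0[exp(−b² + b(Y_{C₁}+Y_{C₂})) 1{Y_{C₁} ≤ T, Y_{C₂} ≤ T}]
  ≤ exp(−(T−b)² + ρT²/(1+ρ))`. -/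
theorem stmt15 (N M n m : ℕ) (hn1 : 1 ≤ n) (hnN : n ≤ N) (hm1 : 1 ≤ m) (hmM : m ≤ M)
    (a : ℝ) (ha : 0 < a)
    (A1 A2 : Finset (Fin N)) (B1 B2 : Finset (Fin M))
    (hA1 : A1.card = n) (hA2 : A2.card = n) (hB1 : B1.card = m) (hB2 : B2.card = m)
    (T : ℝ) (hT : 0 < T)
    (hbT : T / (1 + ((A1 ∩ A2).card : ℝ) * ((B1 ∩ B2).card : ℝ) / ((n : ℝ) * m)) ≤
      a * Real.sqrt ((n : ℝ) * m)) :
    ∫ y, Real.exp (-(a * Real.sqrt ((n : ℝ) * m)) ^ 2 +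
          a * Real.sqrt ((n : ℝ) * m) * (YC N M y A1 B1 + YC N M y A2 B2)) *
          (if YC N M y A1 B1 ≤ T ∧ YC N M y A2 B2 ≤ T then 1 else 0)
        ∂(matLaw N M fun _ _ => 0) ≤
      Real.exp (-(T - a * Real.sqrt ((n : ℝ) * m)) ^ 2 +
        (((A1 ∩ A2).card : ℝ) * ((B1 ∩ B2).card : ℝ) / ((n : ℝ) * m)) * T ^ 2 /
          (1 + ((A1 ∩ A2).card : ℝ) * ((B1 ∩ B2).card : ℝ) / ((n : ℝ) * m))) := by
  have hC : (A1 ×ˢ B1).Nonempty :=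
    .product (Finset.one_le_card.mp (hA1 ▸ hn1)) (Finset.one_le_card.mp (hB1 ▸ hm1))
  have hD : (A2 ×ˢ B2).Nonempty :=
    .product (Finset.one_le_card.mp (hA2 ▸ hn1)) (Finset.one_le_card.mp (hB2 ▸ hm1))
  simp only [← coe_overlap_product hA1 hA2 hB1 hB2, YC_eq_normalizedSum] at hbT ⊢
  exact stmt15_general (iIndepFun_eval_matLaw _) (fun ij _ ↦ hasSubgaussianMGF_eval_matLaw_zero ij)
    hC hD hbT
end
end

section
/- (Binomial stochastically dominates hypergeometric.) For every x ∈ ℝ, P(X ≥ x) ≤ P(X' ≥ x); consequently, for every nondecreasing function g : ℝ → ℝ, E[g(X)] ≤ E[g(X')]. -/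
/-!
For `X'` with law `Bin(n, p)`, the law of `X` is smaller than that of `X'` in the likelihood ratio
order: after cancelling the common factor `C(n, k)`, the ratio `P(X' = k) / P(X = k)` is a constant
times `p ^ k * (1 - p) ^ (n - k) / C(M, n - k)` with `M = N - n`. One step from `k` to `k + 1`
amounts, with `m = n - k - 1`, to `(1 - p) * C(M, m) ≤ p * C(M, m + 1)`, that is, by Pascal's rule,
to `C(M, m) ≤ p * C(M + 1, m + 1)`. As `(M + 1) * C(M, m) = (m + 1) * C(M + 1, m + 1)`, this says
`m + 1 ≤ p * (M + 1)`, which holds for all `m < n` as soon as `n ≤ p * (M + 1)`, in particular for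
`p = n / M`.

The likelihood ratio order implies domination of the expectations of monotone functions by
symmetrization: the sum over all pairs `(i, j)` of
`(g j - g i) * (P(X = i) P(X' = j) - P(X = j) P(X' = i))` has nonnegative terms and equals
`2 (E[g(X')] - E[g(X)])`. The tail bound is the case of the indicator of `[x, ∞)`.
-/

open scoped Classical

noncomputable section

/-- Hypergeometric `HG(N,n,n)` point probability. -/
def hgP (N n k : ℕ) : ℝ :=
  (n.choose k * (N - n).choose (n - k) : ℝ) / (N.choose n : ℝ)

/-- Binomial `Bin(n,p)` point probability. -/
def binP (n : ℕ) (p : ℝ) (k : ℕ) : ℝ :=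
  (n.choose k : ℝ) * p ^ k * (1 - p) ^ (n - k)

section LikelihoodRatio

variable {ι R : Type*} [LinearOrder ι] [CommRing R] [LinearOrder R] [IsStrictOrderedRing R]
  {s : Finset ι} {a b g : ι → R}

/-- The likelihood ratio order between two weight functions on `s`: the ratio `b / a` is
nondecreasing. It is cross-multiplied, so that the weights may vanish. -/
def LikelihoodRatioLEOn (s : Finset ι) (a b : ι → R) : Prop :=
  ∀ i ∈ s, ∀ j ∈ s, i ≤ j → a j * b i ≤ a i * b j

lemma LikelihoodRatioLEOn.sub_mul_cross_nonneg (hab : LikelihoodRatioLEOn s a b)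
    (hg : MonotoneOn g s) {i j : ι} (hi : i ∈ s) (hj : j ∈ s) :
    0 ≤ (g j - g i) * (a i * b j - a j * b i) := by
  rcases le_total i j with hij | hji
  · exact mul_nonneg (sub_nonneg.2 (hg hi hj hij)) (sub_nonneg.2 (hab i hi j hj hij))
  · exact mul_nonneg_of_nonpos_of_nonpos (sub_nonpos.2 (hg hj hi hji))
      (sub_nonpos.2 (by simpa only [mul_comm] using hab j hj i hi hji))

lemma LikelihoodRatioLEOn.sum_mul_mul_sum_le (hab : LikelihoodRatioLEOn s a b)
    (hg : MonotoneOn g s) :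
    (∑ i ∈ s, g i * a i) * ∑ i ∈ s, b i ≤ (∑ i ∈ s, g i * b i) * ∑ i ∈ s, a i := by
  have symmetrization : ∑ i ∈ s, ∑ j ∈ s, (g j - g i) * (a i * b j - a j * b i) =
      2 * ((∑ i ∈ s, g i * b i) * ∑ i ∈ s, a i - (∑ i ∈ s, g i * a i) * ∑ i ∈ s, b i) := by
    have expand (i j : ι) : (g j - g i) * (a i * b j - a j * b i) =
        a i * (g j * b j) - g i * a i * b j + (g i * b i * a j - b i * (g j * a j)) := by ring
    simp only [expand, Finset.sum_add_distrib, Finset.sum_sub_distrib, ← Finset.sum_mul_sum]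
    ring
  have nonneg := Finset.sum_nonneg fun i hi => Finset.sum_nonneg fun j hj =>
    hab.sub_mul_cross_nonneg hg hi hj
  rw [symmetrization] at nonneg
  linarith

lemma LikelihoodRatioLEOn.sum_mul_le (hab : LikelihoodRatioLEOn s a b) (hg : MonotoneOn g s)
    (ha : ∑ i ∈ s, a i = 1) (hb : ∑ i ∈ s, b i = 1) :
    ∑ i ∈ s, g i * a i ≤ ∑ i ∈ s, g i * b i := by
  simpa only [ha, hb, mul_one] using hab.sum_mul_mul_sum_le hg

end LikelihoodRatio

section Choose

variable {K : Type*} [Field K] [LinearOrder K] [IsStrictOrderedRing K] {p : K} {M m : ℕ}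

lemma choose_le_mul_choose_succ_succ (h : (m : K) + 1 ≤ p * (M + 1)) :
    (M.choose m : K) ≤ p * (M + 1).choose (m + 1) := by
  have absorption : ((M : K) + 1) * M.choose m = (M + 1).choose (m + 1) * (m + 1) :=
    mod_cast Nat.add_one_mul_choose_eq M m
  refine le_of_mul_le_mul_right ?_ (by positivity : (0 : K) < m + 1)
  calc (M.choose m : K) * (m + 1)
      ≤ M.choose m * (p * (M + 1)) := by gcongr
    _ = p * ((M + 1) * M.choose m) := by ring
    _ = p * (M + 1).choose (m + 1) * (m + 1) := by rw [absorption, mul_assoc]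

lemma one_sub_mul_choose_le (h : (m : K) + 1 ≤ p * (M + 1)) :
    (1 - p) * M.choose m ≤ p * M.choose (m + 1) := by
  have := choose_le_mul_choose_succ_succ h
  rw [Nat.choose_succ_succ, Nat.cast_add] at this
  linarith

lemma one_sub_pow_mul_choose_le (hp : p ≤ 1) (d : ℕ) (h : (m : K) + d ≤ p * (M + 1)) :
    (1 - p) ^ d * M.choose m ≤ p ^ d * M.choose (m + d) := by
  have hp0 : 0 ≤ p := nonneg_of_mul_nonneg_left ((by positivity : (0 : K) ≤ m + d).trans h)
    (by positivity)
  induction d with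
  | zero => simp
  | succ d ih =>
    rw [Nat.cast_succ] at h
    have step : (1 - p) * M.choose (m + d) ≤ p * M.choose (m + d + 1) :=
      one_sub_mul_choose_le (by push_cast; linarith)
    calc (1 - p) ^ (d + 1) * M.choose m
        = (1 - p) * ((1 - p) ^ d * M.choose m) := by ring
      _ ≤ (1 - p) * (p ^ d * M.choose (m + d)) :=
          mul_le_mul_of_nonneg_left (ih (by linarith)) (sub_nonneg.2 hp)
      _ = p ^ d * ((1 - p) * M.choose (m + d)) := by ring
      _ ≤ p ^ d * (p * M.choose (m + d + 1)) := by gcongr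
      _ = p ^ (d + 1) * M.choose (m + (d + 1)) := by rw [pow_succ, mul_assoc, add_assoc]

end Choose

lemma sum_binP (n : ℕ) (p : ℝ) : ∑ k ∈ Finset.range (n + 1), binP n p k = 1 := by
  calc ∑ k ∈ Finset.range (n + 1), binP n p k
      = (p + (1 - p)) ^ n := by
        rw [add_pow]
        exact Finset.sum_congr rfl fun k _ => by unfold binP; ring
    _ = 1 := by rw [add_sub_cancel, one_pow]

lemma sum_hgP {N n : ℕ} (hnN : n ≤ N) : ∑ k ∈ Finset.range (n + 1), hgP N n k = 1 := by
  have vandermonde :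
      N.choose n = ∑ k ∈ Finset.range (n + 1), n.choose k * (N - n).choose (n - k) := by
    have h := Nat.add_choose_eq n (N - n) n
    rwa [Finset.Nat.sum_antidiagonal_eq_sum_range_succ_mk, Nat.add_sub_cancel' hnN] at h
  have choose_ne_zero : (N.choose n : ℝ) ≠ 0 := mod_cast (Nat.choose_pos hnN).ne'
  unfold hgP
  rw [← Finset.sum_div, div_eq_one_iff_eq choose_ne_zero]
  exact_mod_cast vandermonde.symm

lemma likelihoodRatioLEOn_hgP_binP {N n : ℕ} {p : ℝ} (hp : n ≤ p * ((N - n : ℕ) + 1))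
    (hp1 : p ≤ 1) : LikelihoodRatioLEOn (Finset.range (n + 1)) (hgP N n) (binP n p) := by
  intro i _ j hj hij
  have hp0 : 0 ≤ p := nonneg_of_mul_nonneg_left (n.cast_nonneg.trans hp) (by positivity)
  obtain ⟨d, rfl⟩ := Nat.exists_eq_add_of_le hij
  obtain ⟨m, rfl⟩ := Nat.exists_eq_add_of_le (Finset.mem_range_succ_iff.1 hj)
  have hmi : i + d + m - i = m + d := by omega
  have hmj : i + d + m - (i + d) = m := by omega
  unfold hgP binP
  rw [hmi, hmj]
  set n := i + d + m with hn
  have hmd : (m : ℝ) + d ≤ p * ((N - n : ℕ) + 1) :=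
    le_trans (by rw [hn]; push_cast; linarith [i.cast_nonneg (α := ℝ)]) hp
  set c : ℝ := n.choose i * n.choose (i + d) / N.choose n * (p ^ i * (1 - p) ^ m) with hc
  have hc0 : 0 ≤ c := mul_nonneg (by positivity)
    (mul_nonneg (pow_nonneg hp0 i) (pow_nonneg (sub_nonneg.2 hp1) m))
  calc (n.choose (i + d) * (N - n).choose m : ℝ) / N.choose n *
        (n.choose i * p ^ i * (1 - p) ^ (m + d))
      = c * ((1 - p) ^ d * (N - n).choose m) := by rw [hc]; ring
    _ ≤ c * (p ^ d * (N - n).choose (m + d)) :=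
        mul_le_mul_of_nonneg_left (one_sub_pow_mul_choose_le hp1 d hmd) hc0
    _ = (n.choose i * (N - n).choose (m + d) : ℝ) / N.choose n *
        (n.choose (i + d) * p ^ (i + d) * (1 - p) ^ m) := by rw [hc]; ring

lemma monotone_ite_le {α : Type*} [Preorder α] [DecidableLE α] (x : α) :
    Monotone fun y : α => if x ≤ y then (1 : ℝ) else 0 := by
  intro y z hyz
  dsimp only
  split_ifs with hxy hxz hxz
  exacts [le_rfl, absurd (hxy.trans hyz) hxz, zero_le_one, le_rfl]

lemma le_div_mul_add_one {K : Type*} [Field K] [LinearOrder K] [IsStrictOrderedRing K] {a b : K}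
    (ha : 0 ≤ a) (hb : 0 < b) : a ≤ a / b * (b + 1) := by
  rw [mul_add_one, div_mul_cancel₀ a hb.ne']
  exact le_add_of_nonneg_right (by positivity)

theorem stmt17_general {N n : ℕ} {p : ℝ} (hnN : n ≤ N) (hp : n ≤ p * ((N - n : ℕ) + 1))
    (hp1 : p ≤ 1) :
    (∀ x : ℝ,
      ∑ k ∈ Finset.range (n + 1), (if x ≤ (k : ℝ) then hgP N n k else 0) ≤
        ∑ k ∈ Finset.range (n + 1), (if x ≤ (k : ℝ) then binP n p k else 0)) ∧
    ∀ g : ℝ → ℝ, Monotone g →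
      ∑ k ∈ Finset.range (n + 1), g k * hgP N n k ≤
        ∑ k ∈ Finset.range (n + 1), g k * binP n p k := by
  have expectation_le (g : ℝ → ℝ) (hg : Monotone g) :
      ∑ k ∈ Finset.range (n + 1), g k * hgP N n k ≤
        ∑ k ∈ Finset.range (n + 1), g k * binP n p k :=
    (likelihoodRatioLEOn_hgP_binP hp hp1).sum_mul_le
      ((hg.comp Nat.mono_cast).monotoneOn _) (sum_hgP hnN) (sum_binP n p)
  refine ⟨fun x => ?_, expectation_le⟩
  simpa only [ite_mul, one_mul, zero_mul] using expectation_le _ (monotone_ite_le x)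

/-- Lemma 2 (binomial stochastically dominates hypergeometric): with
`p̃ = n/(N−n)`, for every `x ∈ ℝ`, `P_{HG}(X ≥ x) ≤ P_{Bin}(X ≥ x)`; consequently
`E_{HG}[g(X)] ≤ E_{Bin}[g(X)]` for every nondecreasing `g : ℝ → ℝ`. -/
theorem stmt17 (N n : ℕ) (hn : 0 < n) (hN : 2 * n ≤ N) :
    (∀ x : ℝ,
      ∑ k ∈ Finset.range (n + 1), (if x ≤ (k : ℝ) then hgP N n k else 0) ≤
        ∑ k ∈ Finset.range (n + 1),
          (if x ≤ (k : ℝ) then binP n ((n : ℝ) / ((N - n : ℕ) : ℝ)) k else 0)) ∧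
    ∀ g : ℝ → ℝ, Monotone g →
      ∑ k ∈ Finset.range (n + 1), g k * hgP N n k ≤
        ∑ k ∈ Finset.range (n + 1), g k * binP n ((n : ℝ) / ((N - n : ℕ) : ℝ)) k :=
  stmt17_general (by omega)
    (le_div_mul_add_one n.cast_nonneg (by exact_mod_cast (by omega : 0 < N - n)))
    (div_le_one_of_le₀ (by exact_mod_cast (by omega : n ≤ N - n)) (Nat.cast_nonneg _))
end
end

section
/- (Logarithmic bound for binomial point probabilities.) Let (n_t) be integers with n_t → ∞, (p_t) ⊂ (0,1) with p_t → 0, (r_t) with r_t ≥ 1 and log(r_t)/log(1/p_t) → 0, and (k_t) integers with 1 ≤ k_t ≤ n_t and k_t ≥ n_t/r_t. Then log P_{n_t,p_t}(k_t) ≤ k_t log(p_t)·(1+o(1)); equivalently, there exists a sequence ε_t → 0 such that log P_{n_t,p_t}(k_t) ≤ k_t log(p_t) + ε_t · k_t log(1/p_t) for all t. -/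
open Filter

noncomputable section

/-!
Since `k ^ k / k! ≤ e ^ k`, one has `C(n,k) ≤ n ^ k / k! ≤ (e n / k) ^ k`, and bounding
`(1 - p) ^ (n - k)` by `1` gives `P_{n,p}(k) ≤ (e (n / k) p) ^ k`. If `n / r ≤ k`, this gives
`log P_{n,p}(k) ≤ k log p + k (1 + log r)`, so `ε = (1 + log r) / log (1 / p)` works: it tends to
`0` because `log (1 / p) → ∞` and `log r = o(log (1 / p))`.
-/

-- For `k = 0` the right-hand side is `(n / 0 * e) ^ 0 = 1`.
theorem choose_le_div_mul_exp_one_pow (n k : ℕ) :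
    (n.choose k : ℝ) ≤ (n / k * Real.exp 1) ^ k := by
  rcases eq_or_ne k 0 with rfl | hk
  · simp
  · calc (n.choose k : ℝ) ≤ (n : ℝ) ^ k / k.factorial := Nat.choose_le_pow_div k n
      _ = (n / k : ℝ) ^ k * ((k : ℝ) ^ k / k.factorial) := by
          rw [← mul_div_assoc, ← mul_pow, div_mul_cancel₀ _ (Nat.cast_ne_zero.2 hk)]
      _ ≤ (n / k : ℝ) ^ k * Real.exp k := by
          gcongr
          exact Real.pow_div_factorial_le_exp k k.cast_nonneg k
      _ = (n / k * Real.exp 1) ^ k := by rw [mul_pow, Real.exp_one_pow]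

theorem binP_pos {n k : ℕ} {p : ℝ} (hp : p ∈ Set.Ioo (0 : ℝ) 1) (hkn : k ≤ n) :
    0 < binP n p k :=
  mul_pos (mul_pos (Nat.cast_pos.2 (Nat.choose_pos hkn)) (pow_pos hp.1 k))
    (pow_pos (sub_pos.2 hp.2) (n - k))

theorem binP_le_choose_mul_pow (n k : ℕ) {p : ℝ} (hp : p ∈ Set.Icc (0 : ℝ) 1) :
    binP n p k ≤ n.choose k * p ^ k :=
  mul_le_of_le_one_right (mul_nonneg (n.choose k).cast_nonneg (pow_nonneg hp.1 k))
    (pow_le_one₀ (sub_nonneg.2 hp.2) (sub_le_self 1 hp.1))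

theorem binP_le_div_mul_exp_one_mul_pow (n k : ℕ) {p : ℝ} (hp : p ∈ Set.Icc (0 : ℝ) 1) :
    binP n p k ≤ (n / k * Real.exp 1 * p) ^ k := by
  calc binP n p k ≤ n.choose k * p ^ k := binP_le_choose_mul_pow n k hp
    _ ≤ (n / k * Real.exp 1) ^ k * p ^ k :=
        mul_le_mul_of_nonneg_right (choose_le_div_mul_exp_one_pow n k) (pow_nonneg hp.1 k)
    _ = (n / k * Real.exp 1 * p) ^ k := (mul_pow _ _ _).symm

theorem log_binP_le {n k : ℕ} {p r : ℝ} (hp : p ∈ Set.Ioo (0 : ℝ) 1) (hr : 0 < r)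
    (hkn : k ≤ n) (hkr : (n : ℝ) / r ≤ k) :
    Real.log (binP n p k) ≤ k * Real.log p + k * (1 + Real.log r) := by
  have hp0 : 0 < p := hp.1
  have hnk : (n / k : ℝ) ≤ r :=
    div_le_of_le_mul₀ k.cast_nonneg hr.le ((div_le_iff₀' hr).1 hkr)
  have hbound : binP n p k ≤ (r * Real.exp 1 * p) ^ k :=
    (binP_le_div_mul_exp_one_mul_pow n k (Set.Ioo_subset_Icc_self hp)).trans (by gcongr)
  calc Real.log (binP n p k)
      ≤ Real.log ((r * Real.exp 1 * p) ^ k) := Real.log_le_log (binP_pos hp hkn) hbound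
    _ = k * Real.log p + k * (1 + Real.log r) := by
        rw [Real.log_pow, Real.log_mul (by positivity) hp0.ne',
          Real.log_mul hr.ne' (Real.exp_ne_zero 1), Real.log_exp]
        ring

theorem tendsto_log_one_div_nhdsGT_zero :
    Tendsto (fun x : ℝ => Real.log (1 / x)) (nhdsWithin 0 (Set.Ioi 0)) atTop := by
  simpa only [one_div, Function.comp_def] using
    Real.tendsto_log_atTop.comp tendsto_inv_nhdsGT_zero

theorem stmt18_general {ι : Type*} {l : Filter ι} (n k : ι → ℕ) (p r : ι → ℝ)
    (hp : ∀ t, p t ∈ Set.Ioo (0 : ℝ) 1)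
    (hp0 : Tendsto p l (nhds 0))
    (hr : ∀ t, 0 < r t)
    (hrlog : Tendsto (fun t => Real.log (r t) / Real.log (1 / p t)) l (nhds 0))
    (hkn : ∀ t, k t ≤ n t)
    (hkr : ∀ t, (n t : ℝ) / r t ≤ k t) :
    ∃ ε : ι → ℝ, Tendsto ε l (nhds 0) ∧ ∀ t,
      Real.log (binP (n t) (p t) (k t)) ≤
        (k t : ℝ) * Real.log (p t) + ε t * ((k t : ℝ) * Real.log (1 / p t)) := by
  have hlog : Tendsto (fun t => Real.log (1 / p t)) l atTop :=
    tendsto_log_one_div_nhdsGT_zero.comp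
      (tendsto_nhdsWithin_iff.2 ⟨hp0, Eventually.of_forall fun t => (hp t).1⟩)
  refine ⟨fun t => (1 + Real.log (r t)) / Real.log (1 / p t), ?_, fun t => ?_⟩
  · simpa only [add_div, add_zero] using (hlog.const_div_atTop 1).add hrlog
  · have hlog_pos : 0 < Real.log (1 / p t) :=
      Real.log_pos ((one_lt_div (hp t).1).2 (hp t).2)
    calc Real.log (binP (n t) (p t) (k t))
        ≤ k t * Real.log (p t) + k t * (1 + Real.log (r t)) :=
          log_binP_le (hp t) (hr t) (hkn t) (hkr t)
      _ = _ := by field_simp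

/-- Lemma 3 (logarithmic bound for binomial point probabilities): if `n_t → ∞`,
`p_t → 0`, `r_t ≥ 1` with `log r_t = o(log(1/p_t))`, and `n_t/r_t ≤ k_t ≤ n_t`,
then `log P_{n_t,p_t}(k_t) ≤ k_t log p_t (1 + o(1))`. -/
theorem stmt18 (n k : ℕ → ℕ) (p r : ℕ → ℝ)
    (hn : Tendsto n atTop atTop)
    (hp : ∀ t, p t ∈ Set.Ioo (0 : ℝ) 1)
    (hp0 : Tendsto p atTop (nhds 0))
    (hr : ∀ t, 1 ≤ r t)
    (hrlog : Tendsto (fun t => Real.log (r t) / Real.log (1 / p t)) atTop (nhds 0))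
    (hk1 : ∀ t, 1 ≤ k t) (hkn : ∀ t, k t ≤ n t)
    (hkr : ∀ t, (n t : ℝ) / r t ≤ k t) :
    ∃ ε : ℕ → ℝ, Tendsto ε atTop (nhds 0) ∧ ∀ t,
      Real.log (binP (n t) (p t) (k t)) ≤
        (k t : ℝ) * Real.log (p t) + ε t * ((k t : ℝ) * Real.log (1 / p t)) :=
  stmt18_general n k p r hp hp0 (fun t => one_pos.trans_le (hr t)) hrlog hkn hkr
end
end
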